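/- Let n ≥ 2, m > 1 and δ > 1/2. There exists a constant C > 0 such that for all ζ ∈ ℂ∖ℝ and all Schwartz functions f, g on ℝⁿ, |( |D_x|^{m-1} (ζ − p(D_x))^{-1} f , g )_{L²(ℝⁿ)}| ≤ C ‖⟨x⟩^{δ} f‖_{L²(ℝⁿ)} ‖⟨x⟩^{δ} g‖_{L²(ℝⁿ)}; in particular the supremum over ζ ∈ ℂ∖ℝ of the left-hand side is finite and bounded by the right-hand side. -/

import Mathlib

open MeasureTheory Real Complex RealInnerProductSpace

noncomputable section

/-- Fourier transform with convention `(2π)^(-n/2) ∫ e^(-ix·ξ) f(x) dx`. -/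
def FT (n : ℕ) (f : EuclideanSpace ℝ (Fin n) → ℂ) (ξ : EuclideanSpace ℝ (Fin n)) : ℂ :=
  ((2 * π) ^ (-(n : ℝ) / 2) : ℝ) •
    ∫ x : EuclideanSpace ℝ (Fin n), Complex.exp (-Complex.I * ((⟪x, ξ⟫ : ℝ) : ℂ)) * f x

/-- Inverse Fourier transform. -/
def IFT (n : ℕ) (F : EuclideanSpace ℝ (Fin n) → ℂ) (x : EuclideanSpace ℝ (Fin n)) : ℂ :=
  ((2 * π) ^ (-(n : ℝ) / 2) : ℝ) •
    ∫ ξ : EuclideanSpace ℝ (Fin n), Complex.exp (Complex.I * ((⟪x, ξ⟫ : ℝ) : ℂ)) * F ξ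

/-- Fourier multiplier with symbol `q`: `q(D_x) f = IFT (q · FT f)`. -/
def mult (n : ℕ) (q : EuclideanSpace ℝ (Fin n) → ℂ) (f : EuclideanSpace ℝ (Fin n) → ℂ) :
    EuclideanSpace ℝ (Fin n) → ℂ :=
  IFT n fun ξ => q ξ * FT n f ξ

/-!
By Plancherel the pairing is `∫ q(ξ) f̂(ξ) conj ĝ(ξ) dξ`, and along a ray homogeneity turns the
symbol `q` into the one-dimensional kernel `s ^ (m - 1) / (ζ - s ^ m)`, up to a constant. With `s₀`
the point where `s₀ ^ m = Re ζ`, the integral of this kernel over a symmetric interval around `s₀`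
is an increment of a logarithm, bounded uniformly in `ζ`. What remains is controlled by the Hölder
continuity of order `1/2` of `f̂ conj ĝ` along rays, expressed through the energies
`R ‖f̂‖² + R⁻¹ ‖∇f̂‖²`; since the dimension is at least two, Hardy's inequality handles the origin.

If `f` and `g` live in balls of radii `R` and `R'`, the energy of `f̂` is at most a constant times
`R ‖f‖²`, and the cost of the singular region is logarithmic in `R` and `R'`. Replacing `(f, g)` by
`(t f, t⁻¹ g)` makes the sum of the two energies a product, so the pairing is at most
`C R ^ σ R' ^ σ ‖f‖ ‖g‖` for any `σ > 1/2`. For `1/2 < σ < δ` these bounds sum over the dyadic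
annuli against the weights.
-/

open scoped SchwartzMap ComplexConjugate FourierTransform LineDeriv

section RadialKernel

/-- The kernel `s ^ (m - 1) / (ζ - s ^ m)` of the resolvent along a ray, normalized so that the
symbol equals `s ^ m` there. -/
def radialKernel (m : ℝ) (ζ : ℂ) (s : ℝ) : ℂ :=
  ((s ^ (m - 1) : ℝ) : ℂ) * (ζ - ((s ^ m : ℝ) : ℂ))⁻¹

theorem sub_ofReal_ne_zero {ζ : ℂ} (hζ : ζ.im ≠ 0) (t : ℝ) : ζ - (t : ℂ) ≠ 0 := fun h =>
  hζ (by simpa using congrArg Complex.im h)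

theorem abs_re_sub_le_norm_sub_ofReal (ζ : ℂ) (t : ℝ) : |ζ.re - t| ≤ ‖ζ - (t : ℂ)‖ := by
  simpa using Complex.abs_re_le_norm (ζ - (t : ℂ))

theorem rpow_sub_one_mul_self {s : ℝ} (hs : 0 < s) (m : ℝ) : s ^ (m - 1) * s = s ^ m := by
  rw [← Real.rpow_add_one hs.ne', sub_add_cancel]

theorem rpow_sub_one_mul_abs_sub_le {m s t : ℝ} (hm : 1 ≤ m) (hs : 0 < s) (ht : 0 < t) :
    s ^ (m - 1) * |s - t| ≤ |s ^ m - t ^ m| := by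
  have hs' : 0 ≤ s ^ (m - 1) := by positivity
  rw [← rpow_sub_one_mul_self hs m, ← rpow_sub_one_mul_self ht m]
  rcases le_total t s with h | h
  · have := Real.rpow_le_rpow ht.le h (sub_nonneg.2 hm)
    rw [abs_of_nonneg (sub_nonneg.2 h)]
    exact le_trans (by nlinarith) (le_abs_self _)
  · have := Real.rpow_le_rpow hs.le h (sub_nonneg.2 hm)
    rw [abs_of_nonpos (sub_nonpos.2 h)]
    exact le_trans (by nlinarith) (neg_le_abs _)

theorem abs_rpow_sub_rpow_le {m s t b : ℝ} (hm : 1 ≤ m) (hs : s ∈ Set.Icc 0 b)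
    (ht : t ∈ Set.Icc 0 b) : |s ^ m - t ^ m| ≤ m * b ^ (m - 1) * |s - t| := by
  refine Convex.norm_image_sub_le_of_norm_hasDerivWithin_le
    (fun x _ => (Real.hasDerivAt_rpow_const (.inr hm)).hasDerivWithinAt) (fun x hx => ?_)
    (convex_Icc 0 b) ht hs
  have := Real.rpow_le_rpow hx.1 hx.2 (sub_nonneg.2 hm)
  have := Real.rpow_nonneg hx.1 (m - 1)
  rw [Real.norm_of_nonneg (by positivity)]
  gcongr

theorem norm_radialKernel {m s : ℝ} (hs : 0 ≤ s) (ζ : ℂ) :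
    ‖radialKernel m ζ s‖ = s ^ (m - 1) / ‖ζ - ((s ^ m : ℝ) : ℂ)‖ := by
  rw [radialKernel, norm_mul, norm_inv, Complex.norm_real, Real.norm_of_nonneg (by positivity),
    div_eq_mul_inv]

theorem continuous_radialKernel {m : ℝ} (hm : 1 ≤ m) {ζ : ℂ} (hζ : ζ.im ≠ 0) :
    Continuous (radialKernel m ζ) := by
  have hpow {p : ℝ} (hp : 0 ≤ p) : Continuous fun s : ℝ => ((s ^ p : ℝ) : ℂ) :=
    Complex.continuous_ofReal.comp (Real.continuous_rpow_const hp)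
  exact (hpow (sub_nonneg.2 hm)).mul
    ((continuous_const.sub (hpow (by linarith))).inv₀ fun s => sub_ofReal_ne_zero hζ _)

theorem norm_radialKernel_le_inv {m s : ℝ} (hs : 0 < s) {ζ : ℂ} (hre : ζ.re ≤ 0) :
    ‖radialKernel m ζ s‖ ≤ s⁻¹ := by
  have hsm : 0 < s ^ m := by positivity
  have h : s ^ m ≤ ‖ζ - ((s ^ m : ℝ) : ℂ)‖ := by
    have := abs_re_sub_le_norm_sub_ofReal ζ (s ^ m)
    linarith [neg_le_abs (ζ.re - s ^ m)]
  rw [norm_radialKernel hs.le, ← one_div, div_le_div_iff₀ (by linarith) hs,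
    rpow_sub_one_mul_self hs, one_mul]
  exact h

theorem norm_radialKernel_mul_abs_sub_le_one {m s s₀ : ℝ} (hm : 1 ≤ m) (hs : 0 < s)
    (hs₀ : 0 < s₀) {ζ : ℂ} (hζ : ζ.im ≠ 0) (hre : ζ.re = s₀ ^ m) :
    ‖radialKernel m ζ s‖ * |s - s₀| ≤ 1 := by
  have h := abs_re_sub_le_norm_sub_ofReal ζ (s ^ m)
  rw [hre, abs_sub_comm] at h
  rw [norm_radialKernel hs.le, div_mul_eq_mul_div,
    div_le_one (norm_pos_iff.2 (sub_ofReal_ne_zero hζ _))]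
  exact (rpow_sub_one_mul_abs_sub_le hm hs hs₀).trans h

theorem rpow_sub_one_le_one_add {m s : ℝ} (hm : 1 ≤ m) (hs : 0 ≤ s) :
    s ^ (m - 1) ≤ 1 + s ^ m := by
  rcases le_total s 1 with h | h
  · linarith [Real.rpow_le_one hs h (sub_nonneg.2 hm), Real.rpow_nonneg hs m]
  · linarith [Real.rpow_le_rpow_of_exponent_le h (sub_le_self m zero_le_one)]

theorem norm_radialKernel_le {m s : ℝ} (hm : 1 ≤ m) (hs : 0 ≤ s) {ζ : ℂ} (hζ : ζ.im ≠ 0) :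
    ‖radialKernel m ζ s‖ ≤ (1 + ‖ζ‖) / |ζ.im| + 1 := by
  set d := ‖ζ - ((s ^ m : ℝ) : ℂ)‖
  have him : 0 < |ζ.im| := abs_pos.2 hζ
  have him_le : |ζ.im| ≤ d := by simpa using Complex.abs_im_le_norm (ζ - ((s ^ m : ℝ) : ℂ))
  have hsm : s ^ m ≤ ‖ζ‖ + d := by
    have := norm_sub_le ζ (ζ - ((s ^ m : ℝ) : ℂ))
    rwa [sub_sub_cancel, Complex.norm_real, Real.norm_of_nonneg (by positivity)] at this
  rw [norm_radialKernel hs, div_le_iff₀ (him.trans_le him_le), add_mul, one_mul]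
  calc s ^ (m - 1) ≤ (1 + ‖ζ‖) + d := by linarith [rpow_sub_one_le_one_add hm hs]
    _ = (1 + ‖ζ‖) / |ζ.im| * |ζ.im| + d := by rw [div_mul_cancel₀ _ him.ne']
    _ ≤ (1 + ‖ζ‖) / |ζ.im| * d + d := by gcongr

theorem norm_le_mul_norm_of_abs_re_le {z w : ℂ} {L : ℝ} (hL : 1 ≤ L) (him : z.im = w.im)
    (hre : |z.re| ≤ L * |w.re|) : ‖z‖ ≤ L * ‖w‖ := by
  refine le_of_sq_le_sq ?_ (by positivity)
  have hre2 : |z.re| ^ 2 ≤ (L * |w.re|) ^ 2 := pow_le_pow_left₀ (abs_nonneg _) hre 2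
  rw [mul_pow, sq_abs, sq_abs] at hre2
  rw [mul_pow, Complex.sq_norm, Complex.sq_norm, Complex.normSq_apply, Complex.normSq_apply, him]
  nlinarith [mul_nonneg (mul_self_nonneg w.im) (by nlinarith : 0 ≤ L ^ 2 - 1)]

theorem norm_log_sub_log_le {z w : ℂ} {L : ℝ} (hL : 0 < L) (hz : z ≠ 0) (hw : w ≠ 0)
    (hzw : ‖z‖ ≤ L * ‖w‖) (hwz : ‖w‖ ≤ L * ‖z‖) :
    ‖Complex.log z - Complex.log w‖ ≤ Real.log L + 2 * π := by
  have hz' := norm_pos_iff.2 hz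
  have hw' := norm_pos_iff.2 hw
  refine (Complex.norm_le_abs_re_add_abs_im _).trans (add_le_add ?_ ?_)
  · have h₁ := Real.log_le_log hz' hzw
    have h₂ := Real.log_le_log hw' hwz
    rw [Real.log_mul hL.ne' hw'.ne'] at h₁
    rw [Real.log_mul hL.ne' hz'.ne'] at h₂
    rw [Complex.sub_re, Complex.log_re, Complex.log_re, abs_le]
    constructor <;> linarith
  · rw [Complex.sub_im, Complex.log_im, Complex.log_im]
    linarith [abs_sub z.arg w.arg, Complex.abs_arg_le_pi z, Complex.abs_arg_le_pi w]

theorem hasDerivAt_log_sub_rpow {m : ℝ} (hm : 1 ≤ m) {ζ : ℂ} (hζ : ζ.im ≠ 0) (s : ℝ) :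
    HasDerivAt (fun s : ℝ => -(m : ℂ)⁻¹ * Complex.log (ζ - ((s ^ m : ℝ) : ℂ)))
      (radialKernel m ζ s) s := by
  have hpow : HasDerivAt (fun s : ℝ => ((s ^ m : ℝ) : ℂ)) ((m * s ^ (m - 1) : ℝ) : ℂ) s :=
    (Real.hasDerivAt_rpow_const (.inr hm)).ofReal_comp
  have hlog := (hpow.const_sub ζ).clog_real
    (Complex.mem_slitPlane_iff.2 (.inr (by simpa using hζ)))
  refine (hlog.const_mul (-(m : ℂ)⁻¹)).congr_deriv ?_
  have : (m : ℂ) ≠ 0 := by exact_mod_cast (zero_lt_one.trans_le hm).ne'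
  rw [radialKernel]
  push_cast
  field_simp

theorem one_le_mul_two_rpow_sub_one {m : ℝ} (hm : 1 ≤ m) : 1 ≤ m * 2 ^ (m - 1) :=
  one_le_mul_of_one_le_of_one_le hm (Real.one_le_rpow one_le_two (sub_nonneg.2 hm))

/-- The principal value at the singularity is an increment of a branch of the logarithm, between
two points on the same horizontal line whose moduli are comparable. -/
theorem norm_integral_radialKernel_le {m s₀ ε : ℝ} (hm : 1 ≤ m) (hs₀ : 0 < s₀) (hε : 0 < ε)
    (hε' : ε < s₀) {ζ : ℂ} (hζ : ζ.im ≠ 0) (hre : ζ.re = s₀ ^ m) :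
    ‖∫ s in (s₀ - ε)..(s₀ + ε), radialKernel m ζ s‖ ≤ Real.log (m * 2 ^ (m - 1)) + 2 * π := by
  set L := m * 2 ^ (m - 1)
  have hL1 : 1 ≤ L := one_le_mul_two_rpow_sub_one hm
  have hlower (σ : ℝ) (hσ : |σ| = ε) :
      s₀ ^ (m - 1) * ε ≤ |s₀ ^ m - (s₀ + σ) ^ m| := by
    have := neg_abs_le σ
    simpa [hσ] using rpow_sub_one_mul_abs_sub_le hm hs₀ (by linarith : 0 < s₀ + σ)
  have hupper (σ : ℝ) (hσ : |σ| = ε) :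
      |s₀ ^ m - (s₀ + σ) ^ m| ≤ L * (s₀ ^ (m - 1) * ε) := by
    have := neg_abs_le σ
    have := le_abs_self σ
    have h := abs_rpow_sub_rpow_le hm (s := s₀) (t := s₀ + σ) (b := 2 * s₀)
      ⟨hs₀.le, by linarith⟩ ⟨by linarith, by linarith⟩
    rw [sub_add_cancel_left, abs_neg, hσ, Real.mul_rpow zero_le_two hs₀.le] at h
    exact h.trans_eq (by ring)
  have hcompare (σ τ : ℝ) (hσ : |σ| = ε) (hτ : |τ| = ε) :
      ‖ζ - (((s₀ + σ) ^ m : ℝ) : ℂ)‖ ≤ L * ‖ζ - (((s₀ + τ) ^ m : ℝ) : ℂ)‖ := by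
    refine norm_le_mul_norm_of_abs_re_le hL1 (by simp) ?_
    simp only [Complex.sub_re, Complex.ofReal_re, hre]
    exact (hupper σ hσ).trans (mul_le_mul_of_nonneg_left (hlower τ hτ) (by linarith))
  have hinv : ‖-(m : ℂ)⁻¹‖ ≤ 1 := by
    rw [norm_neg, norm_inv, Complex.norm_real, Real.norm_of_nonneg (by linarith)]
    exact inv_le_one_of_one_le₀ hm
  have hε₁ : |ε| = ε := abs_of_pos hε
  have hε₂ : |-ε| = ε := by rw [abs_neg, hε₁]
  rw [intervalIntegral.integral_eq_sub_of_hasDerivAt (fun s _ => hasDerivAt_log_sub_rpow hm hζ s)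
    ((continuous_radialKernel hm hζ).intervalIntegrable _ _), ← mul_sub, norm_mul,
    sub_eq_add_neg s₀]
  refine (mul_le_of_le_one_left (norm_nonneg _) hinv).trans ?_
  exact norm_log_sub_log_le (by linarith) (sub_ofReal_ne_zero hζ _) (sub_ofReal_ne_zero hζ _)
    (hcompare _ _ hε₁ hε₂) (hcompare _ _ hε₂ hε₁)

end RadialKernel

section AbsSub

theorem integral_comp_abs_sub (f : ℝ → ℝ) (s₀ : ℝ) :
    ∫ s, f |s - s₀| = 2 * ∫ w in Set.Ioi 0, f w := by
  rw [integral_sub_right_eq_self (fun s => f |s|) s₀, integral_comp_abs]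

theorem integrable_comp_abs_sub {f : ℝ → ℝ} (hf : IntegrableOn f (Set.Ioi 0)) (s₀ : ℝ) :
    Integrable fun s => f |s - s₀| := by
  refine Integrable.comp_sub_right (f := fun s => f |s|) ?_ s₀
  simpa [IntegrableOn] using
    (integrable_fun_norm_addHaar (volume : Measure ℝ) (f := f)).2 (by simpa using hf)

theorem integrable_indicator_Ioc_comp_abs_sub {f : ℝ → ℝ} {a b : ℝ} (hab : a ≤ b)
    (hf : IntervalIntegrable f volume a b) (s₀ : ℝ) :
    Integrable fun s => (Set.Ioc a b).indicator f |s - s₀| :=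
  integrable_comp_abs_sub
    (((intervalIntegrable_iff_integrableOn_Ioc_of_le hab).1 hf).integrable_indicator
      measurableSet_Ioc).integrableOn s₀

theorem integral_indicator_Ioc_comp_abs_sub (f : ℝ → ℝ) {a b : ℝ} (ha : 0 ≤ a) (hab : a ≤ b)
    (s₀ : ℝ) : ∫ s, (Set.Ioc a b).indicator f |s - s₀| = 2 * ∫ w in a..b, f w := by
  rw [integral_comp_abs_sub, setIntegral_indicator measurableSet_Ioc,
    Set.inter_eq_right.2 fun w hw => Set.mem_Ioi.2 (ha.trans_lt hw.1),
    intervalIntegral.integral_of_le hab]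

end AbsSub

section HalfLine

/-- Size and regularity of a function on the half-line: it is bounded by `Q`, its integral against
`(1 + s⁻¹) ds` is at most `Q`, and near each point it is Hölder continuous of order `1/2` at scale
`S⁻¹` (plus a Lipschitz term), with constant `A * Q`. -/
structure HalfLineBound (A S Q : ℝ) (H : ℝ → ℂ) : Prop where
  continuous : Continuous H
  norm_le : ∀ s, 0 < s → ‖H s‖ ≤ Q
  integrableOn : IntegrableOn (fun s => (1 + s⁻¹) * ‖H s‖) (Set.Ioi 0)
  integral_le : ∫ s in Set.Ioi 0, (1 + s⁻¹) * ‖H s‖ ≤ Q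
  norm_sub_le : ∀ s₀ s, 0 < s₀ → |s - s₀| ≤ s₀ / 2 →
    ‖H s - H s₀‖ ≤ A * Q * (√(S * |s - s₀|) + |s - s₀| / s₀)

variable {A S Q m : ℝ} {H : ℝ → ℂ} {ζ : ℂ}

theorem HalfLineBound.nonneg (hH : HalfLineBound A S Q H) : 0 ≤ Q :=
  (norm_nonneg _).trans (hH.norm_le 1 one_pos)

theorem HalfLineBound.integrableOn_radialKernel_mul (hH : HalfLineBound A S Q H) (hm : 1 ≤ m)
    (hζ : ζ.im ≠ 0) : IntegrableOn (fun s => radialKernel m ζ s * H s) (Set.Ioi 0) := by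
  refine (hH.integrableOn.const_mul ((1 + ‖ζ‖) / |ζ.im| + 1)).mono'
    ((continuous_radialKernel hm hζ).mul hH.continuous).aestronglyMeasurable ?_
  refine ae_restrict_of_forall_mem measurableSet_Ioi fun s hs => ?_
  have hs : 0 < s := hs
  rw [norm_mul]
  refine mul_le_mul (norm_radialKernel_le hm hs.le hζ) ?_ (norm_nonneg _) (by positivity)
  exact le_mul_of_one_le_left (norm_nonneg _) (le_add_of_nonneg_right (by positivity))

theorem HalfLineBound.norm_radialKernel_mul_sub_le (hH : HalfLineBound A S Q H) (hm : 1 ≤ m)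
    (hζ : ζ.im ≠ 0) (hS : 0 ≤ S) {s₀ s : ℝ} (hs₀ : 0 < s₀) (hre : ζ.re = s₀ ^ m)
    (hne : s ≠ s₀) (hss₀ : |s - s₀| ≤ s₀ / 2) :
    ‖radialKernel m ζ s * (H s - H s₀)‖ ≤ A * Q * (√S * |s - s₀| ^ (-(1 / 2) : ℝ) + s₀⁻¹) := by
  have hQ := hH.nonneg
  have hpos : 0 < |s - s₀| := abs_pos.2 (sub_ne_zero.2 hne)
  have hk : ‖radialKernel m ζ s‖ ≤ |s - s₀|⁻¹ := by
    rw [← one_div, le_div_iff₀ hpos]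
    exact norm_radialKernel_mul_abs_sub_le_one hm (by linarith [neg_abs_le (s - s₀)]) hs₀ hζ hre
  have hsqrt : |s - s₀|⁻¹ * √|s - s₀| = |s - s₀| ^ (-(1 / 2) : ℝ) := by
    rw [Real.sqrt_eq_rpow, ← Real.rpow_neg_one, ← Real.rpow_add hpos]
    norm_num
  calc ‖radialKernel m ζ s * (H s - H s₀)‖
      ≤ |s - s₀|⁻¹ * (A * Q * (√(S * |s - s₀|) + |s - s₀| / s₀)) := by
        rw [norm_mul]
        gcongr
        exact hH.norm_sub_le s₀ s hs₀ hss₀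
    _ = A * Q * (√S * (|s - s₀|⁻¹ * √|s - s₀|) + (|s - s₀|⁻¹ * |s - s₀|) * s₀⁻¹) := by
        rw [Real.sqrt_mul hS]; ring
    _ = _ := by rw [hsqrt, inv_mul_cancel₀ hpos.ne', one_mul]

theorem integral_indicator_rpow_neg_half_abs_sub {ε : ℝ} (hε : 0 ≤ ε) (s₀ : ℝ) :
    ∫ s, (Set.Ioc 0 ε).indicator (fun w : ℝ => w ^ (-(1 / 2) : ℝ)) |s - s₀| = 4 * √ε := by
  rw [integral_indicator_Ioc_comp_abs_sub _ le_rfl hε, integral_rpow (.inl (by norm_num)),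
    Real.sqrt_eq_rpow]
  norm_num
  ring

theorem HalfLineBound.norm_integral_radialKernel_mul_sub_le (hH : HalfLineBound A S Q H)
    (hm : 1 ≤ m) (hζ : ζ.im ≠ 0) (hA : 0 ≤ A) (hS : 0 ≤ S) {s₀ ε : ℝ} (hs₀ : 0 < s₀)
    (hre : ζ.re = s₀ ^ m) (hε : 0 ≤ ε) (hε' : ε ≤ s₀ / 2) (hεS : S * ε ≤ 1) :
    ‖∫ s in (s₀ - ε)..(s₀ + ε), radialKernel m ζ s * (H s - H s₀)‖ ≤ 5 * A * Q := by
  have hQ := hH.nonneg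
  set u : ℝ → ℝ := fun s => (Set.Ioc 0 ε).indicator (fun w : ℝ => w ^ (-(1 / 2) : ℝ)) |s - s₀|
    with hu_def
  have hu : Integrable u := integrable_indicator_Ioc_comp_abs_sub hε
    (intervalIntegral.intervalIntegrable_rpow' (by norm_num)) s₀
  have hu0 : 0 ≤ u := fun s => Set.indicator_nonneg (fun w hw => Real.rpow_nonneg hw.1.le _) _
  have hbound : ∀ s ∈ Set.Ioc (s₀ - ε) (s₀ + ε),
      ‖radialKernel m ζ s * (H s - H s₀)‖ ≤ A * Q * (√S * u s + s₀⁻¹) := fun s hs => by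
    have habs : |s - s₀| ≤ ε := abs_le.2 ⟨by linarith [hs.1], by linarith [hs.2]⟩
    rcases eq_or_ne s s₀ with rfl | hne
    · simp only [sub_self, mul_zero, norm_zero]
      have : 0 ≤ u s := hu0 s
      positivity
    · simp only [hu_def, Set.indicator_of_mem (show |s - s₀| ∈ Set.Ioc 0 ε from
        ⟨abs_pos.2 (sub_ne_zero.2 hne), habs⟩)]
      exact hH.norm_radialKernel_mul_sub_le hm hζ hS hs₀ hre hne (habs.trans hε')
  have hle : s₀ - ε ≤ s₀ + ε := by linarith
  have hu_int : ∫ s in (s₀ - ε)..(s₀ + ε), u s ≤ 4 * √ε := by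
    rw [intervalIntegral.integral_of_le hle, ← integral_indicator_rpow_neg_half_abs_sub hε s₀]
    exact setIntegral_le_integral hu (.of_forall hu0)
  have hu_ii : IntervalIntegrable u volume (s₀ - ε) (s₀ + ε) := hu.intervalIntegrable
  calc ‖∫ s in (s₀ - ε)..(s₀ + ε), radialKernel m ζ s * (H s - H s₀)‖
      ≤ ∫ s in (s₀ - ε)..(s₀ + ε), A * Q * (√S * u s + s₀⁻¹) :=
        intervalIntegral.norm_integral_le_of_norm_le hle (.of_forall hbound)
          (((hu_ii.const_mul _).add intervalIntegrable_const).const_mul _)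
    _ = A * Q * (√S * (∫ s in (s₀ - ε)..(s₀ + ε), u s) + 2 * ε * s₀⁻¹) := by
        rw [intervalIntegral.integral_const_mul,
          intervalIntegral.integral_add (hu_ii.const_mul _) intervalIntegrable_const,
          intervalIntegral.integral_const_mul, intervalIntegral.integral_const, smul_eq_mul]
        ring
    _ ≤ A * Q * (√S * (4 * √ε) + 1) := by
        gcongr
        rw [← div_eq_mul_inv, div_le_one hs₀]
        linarith
    _ ≤ A * Q * (4 + 1) := by
        have : √S * √ε ≤ 1 := by rw [← Real.sqrt_mul hS]; exact Real.sqrt_le_one.2 hεS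
        gcongr
        linarith
    _ = 5 * A * Q := by ring

theorem HalfLineBound.norm_integral_near_le (hH : HalfLineBound A S Q H) (hm : 1 ≤ m)
    (hζ : ζ.im ≠ 0) (hA : 0 ≤ A) (hS : 0 ≤ S) {s₀ ε : ℝ} (hs₀ : 0 < s₀) (hre : ζ.re = s₀ ^ m)
    (hε : 0 < ε) (hε' : ε ≤ s₀ / 2) (hεS : S * ε ≤ 1) :
    ‖∫ s in (s₀ - ε)..(s₀ + ε), radialKernel m ζ s * H s‖ ≤
      (Real.log (m * 2 ^ (m - 1)) + 2 * π + 5 * A) * Q := by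
  have hk := continuous_radialKernel hm hζ
  have hpv := norm_integral_radialKernel_le hm hs₀ hε (by linarith) hζ hre
  have hsplit : ∫ s in (s₀ - ε)..(s₀ + ε), radialKernel m ζ s * H s =
      (∫ s in (s₀ - ε)..(s₀ + ε), radialKernel m ζ s * (H s - H s₀)) +
        (∫ s in (s₀ - ε)..(s₀ + ε), radialKernel m ζ s) * H s₀ := by
    have hadd := intervalIntegral.integral_add (μ := volume)
      ((hk.mul (hH.continuous.sub (continuous_const (y := H s₀)))).intervalIntegrable
        (s₀ - ε) (s₀ + ε))
      ((hk.mul (continuous_const (y := H s₀))).intervalIntegrable (s₀ - ε) (s₀ + ε))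
    rw [← intervalIntegral.integral_mul_const]
    refine (intervalIntegral.integral_congr fun s _ => ?_).trans hadd
    simp only [Pi.mul_apply, Pi.sub_apply]
    ring
  calc ‖∫ s in (s₀ - ε)..(s₀ + ε), radialKernel m ζ s * H s‖
      ≤ 5 * A * Q + (Real.log (m * 2 ^ (m - 1)) + 2 * π) * Q := by
        rw [hsplit]
        refine (norm_add_le _ _).trans (add_le_add
          (hH.norm_integral_radialKernel_mul_sub_le hm hζ hA hS hs₀ hre hε.le hε' hεS) ?_)
        rw [norm_mul]
        exact mul_le_mul hpv (hH.norm_le _ hs₀) (norm_nonneg _) ((norm_nonneg _).trans hpv)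
    _ = _ := by ring

theorem inv_abs_sub_le {s₀ s ε : ℝ} (hs : 0 < s) (hεs : ε < |s - s₀|) :
    |s - s₀|⁻¹ ≤ 3 * (1 + s⁻¹) +
      (Set.Ioc ε (min 1 (s₀ / 2))).indicator (fun w => w⁻¹) |s - s₀| := by
  rcases le_or_gt |s - s₀| (min 1 (s₀ / 2)) with h | h
  · rw [Set.indicator_of_mem (Set.mem_Ioc.2 ⟨hεs, h⟩)]
    exact le_add_of_nonneg_left (by positivity)
  · rw [Set.indicator_of_notMem fun hw => h.not_ge hw.2, add_zero]
    have hs_inv : 0 < s⁻¹ := inv_pos.2 hs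
    rcases min_lt_iff.1 h with h | h
    · linarith [inv_le_one_of_one_le₀ h.le]
    · have hlt : s / 3 ≤ |s - s₀| := by linarith [le_abs_self (s - s₀)]
      have := inv_anti₀ (by positivity) hlt
      rw [inv_div, div_eq_mul_inv] at this
      linarith

theorem HalfLineBound.norm_radialKernel_mul_le (hH : HalfLineBound A S Q H) (hm : 1 ≤ m)
    (hζ : ζ.im ≠ 0) {s₀ s ε : ℝ} (hs : 0 < s) (hs₀ : 0 < s₀) (hre : ζ.re = s₀ ^ m) (hε : 0 ≤ ε)
    (hεs : ε < |s - s₀|) :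
    ‖radialKernel m ζ s * H s‖ ≤ 3 * ((1 + s⁻¹) * ‖H s‖) +
      (Set.Ioc ε (min 1 (s₀ / 2))).indicator (fun w => w⁻¹) |s - s₀| * Q := by
  set v := (Set.Ioc ε (min 1 (s₀ / 2))).indicator (fun w => w⁻¹) |s - s₀|
  have hv : 0 ≤ v := Set.indicator_nonneg (fun w hw => inv_nonneg.2 (hε.trans hw.1.le)) _
  have hk : ‖radialKernel m ζ s‖ ≤ |s - s₀|⁻¹ := by
    rw [← one_div, le_div_iff₀ (hε.trans_lt hεs)]
    exact norm_radialKernel_mul_abs_sub_le_one hm hs hs₀ hζ hre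
  calc ‖radialKernel m ζ s * H s‖ ≤ (3 * (1 + s⁻¹) + v) * ‖H s‖ := by
        rw [norm_mul]
        exact mul_le_mul_of_nonneg_right (hk.trans (inv_abs_sub_le hs hεs)) (norm_nonneg _)
    _ = 3 * ((1 + s⁻¹) * ‖H s‖) + v * ‖H s‖ := by ring
    _ ≤ _ := by gcongr; exact hH.norm_le s hs

theorem HalfLineBound.norm_integral_away_le (hH : HalfLineBound A S Q H) (hm : 1 ≤ m)
    (hζ : ζ.im ≠ 0) {s₀ ε : ℝ} (hs₀ : 0 < s₀) (hre : ζ.re = s₀ ^ m) (hε : 0 < ε)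
    (hερ : ε ≤ min 1 (s₀ / 2)) :
    ‖∫ s in Set.Ioi 0 \ Set.Icc (s₀ - ε) (s₀ + ε), radialKernel m ζ s * H s‖ ≤
      (3 + 2 * Real.log (min 1 (s₀ / 2) / ε)) * Q := by
  set ρ := min 1 (s₀ / 2)
  set v : ℝ → ℝ := fun s => (Set.Ioc ε ρ).indicator (fun w => w⁻¹) |s - s₀|
  have h0 : (0 : ℝ) ∉ Set.uIcc ε ρ := Set.notMem_uIcc_of_lt hε (hε.trans_le hερ)
  have hv : Integrable v := integrable_indicator_Ioc_comp_abs_sub hερ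
    (intervalIntegral.intervalIntegrable_inv (fun w hw => ne_of_mem_of_not_mem hw h0)
      continuousOn_id) s₀
  have hv0 (s : ℝ) : 0 ≤ v s :=
    Set.indicator_nonneg (fun w hw => inv_nonneg.2 (hε.le.trans hw.1.le)) _
  have hfar := hH.integrableOn.const_mul 3
  have hnear := (hv.mul_const Q).integrableOn (s := Set.Ioi 0)
  calc ‖∫ s in Set.Ioi 0 \ Set.Icc (s₀ - ε) (s₀ + ε), radialKernel m ζ s * H s‖
      ≤ ∫ s in Set.Ioi 0 \ Set.Icc (s₀ - ε) (s₀ + ε), 3 * ((1 + s⁻¹) * ‖H s‖) + v s * Q := by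
        refine norm_integral_le_of_norm_le (IntegrableOn.mono_set (hfar.add hnear) Set.sdiff_subset)
          (ae_restrict_of_forall_mem (measurableSet_Ioi.diff measurableSet_Icc) fun s hs => ?_)
        refine hH.norm_radialKernel_mul_le hm hζ hs.1 hs₀ hre hε.le ?_
        contrapose! hs
        exact fun h => h.2 ⟨by linarith [neg_abs_le (s - s₀)], by linarith [le_abs_self (s - s₀)]⟩
    _ ≤ ∫ s in Set.Ioi 0, 3 * ((1 + s⁻¹) * ‖H s‖) + v s * Q := by
        refine setIntegral_mono_set (hfar.add hnear)
          (ae_restrict_of_forall_mem measurableSet_Ioi fun s hs => ?_)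
          (Filter.Eventually.of_forall Set.sdiff_subset)
        have : 0 < s := hs
        exact add_nonneg (by positivity) (mul_nonneg (hv0 s) hH.nonneg)
    _ = 3 * (∫ s in Set.Ioi 0, (1 + s⁻¹) * ‖H s‖) + (∫ s in Set.Ioi 0, v s) * Q := by
        rw [integral_add hfar hnear, integral_const_mul, integral_mul_const]
    _ ≤ 3 * Q + (∫ s, v s) * Q :=
        add_le_add (mul_le_mul_of_nonneg_left hH.integral_le zero_le_three)
          (mul_le_mul_of_nonneg_right (setIntegral_le_integral hv (.of_forall hv0)) hH.nonneg)
    _ = _ := by rw [integral_indicator_Ioc_comp_abs_sub _ hε.le hερ, integral_inv h0]; ring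

theorem HalfLineBound.norm_integral_le_of_re_nonpos (hH : HalfLineBound A S Q H)
    (hre : ζ.re ≤ 0) : ‖∫ s in Set.Ioi 0, radialKernel m ζ s * H s‖ ≤ Q := by
  refine (norm_integral_le_of_norm_le hH.integrableOn
    (ae_restrict_of_forall_mem measurableSet_Ioi fun s hs => ?_)).trans hH.integral_le
  rw [norm_mul]
  gcongr
  exact (norm_radialKernel_le_inv hs hre).trans (le_add_of_nonneg_left zero_le_one)

theorem HalfLineBound.norm_integral_radialKernel_mul_le (hH : HalfLineBound A S Q H)
    (hm : 1 ≤ m) (hζ : ζ.im ≠ 0) (hA : 0 ≤ A) (hS : 1 ≤ S) :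
    ‖∫ s in Set.Ioi 0, radialKernel m ζ s * H s‖ ≤
      (Real.log (m * 2 ^ (m - 1)) + 2 * π + 5 * A + 3) * (1 + Real.log S) * Q := by
  set K := Real.log (m * 2 ^ (m - 1)) + 2 * π + 5 * A
  have hQ := hH.nonneg
  have hlogS : 0 ≤ Real.log S := Real.log_nonneg hS
  have hK : 0 ≤ K := by
    have := Real.log_nonneg (one_le_mul_two_rpow_sub_one hm)
    positivity
  rcases le_or_gt ζ.re 0 with hre | hre
  · exact (hH.norm_integral_le_of_re_nonpos hre).trans
      (le_mul_of_one_le_left hQ (by nlinarith [mul_nonneg hK hlogS]))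
  set s₀ := ζ.re ^ m⁻¹
  have hs₀ : 0 < s₀ := Real.rpow_pos_of_pos hre _
  have hre₀ : ζ.re = s₀ ^ m := (Real.rpow_inv_rpow hre.le (by linarith)).symm
  set ρ := min 1 (s₀ / 2)
  have hρ : 0 < ρ := lt_min one_pos (half_pos hs₀)
  have hε : 0 < ρ / S := by positivity
  have hερ : ρ / S ≤ ρ := div_le_self hρ.le hS
  have hερ₀ : ρ / S ≤ s₀ / 2 := hερ.trans (min_le_right _ _)
  have hnear := hH.norm_integral_near_le hm hζ hA (by linarith) hs₀ hre₀ hε hερ₀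
    ((mul_div_cancel₀ ρ (by linarith)).trans_le (min_le_left _ _))
  have haway := hH.norm_integral_away_le hm hζ hs₀ hre₀ hε hερ
  rw [div_div_cancel₀ hρ.ne'] at haway
  rw [intervalIntegral.integral_of_le (by linarith), ← integral_Icc_eq_integral_Ioc] at hnear
  have hsub : Set.Icc (s₀ - ρ / S) (s₀ + ρ / S) ⊆ Set.Ioi 0 := fun s hs =>
    Set.mem_Ioi.2 (by linarith [hs.1])
  rw [← sub_add_cancel (∫ s in Set.Ioi 0, radialKernel m ζ s * H s)
      (∫ s in Set.Icc (s₀ - ρ / S) (s₀ + ρ / S), radialKernel m ζ s * H s),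
    ← setIntegral_sdiff measurableSet_Icc (hH.integrableOn_radialKernel_mul hm hζ) hsub]
  calc _ ≤ (3 + 2 * Real.log S) * Q + K * Q := (norm_add_le _ _).trans (add_le_add haway hnear)
    _ = (K + 3 + 2 * Real.log S) * Q := by ring
    _ ≤ _ := by
        gcongr
        nlinarith [mul_nonneg hK hlogS]

end HalfLine

section RayEnergy

theorem integrable_pow_mul_norm_mul_norm (φ ψ : 𝓢(ℝ, ℂ)) (k : ℕ) :
    Integrable fun s : ℝ => s ^ k * (‖φ s‖ * ‖ψ s‖) := by
  refine ((φ.integrable_pow_mul volume k).mul_const (SchwartzMap.seminorm ℝ 0 0 ψ)).mono'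
    ((continuous_pow k).mul (φ.continuous.norm.mul ψ.continuous.norm)).aestronglyMeasurable
    (.of_forall fun s => ?_)
  rw [norm_mul, norm_pow, norm_mul, norm_norm, norm_norm, ← mul_assoc]
  gcongr
  exact ψ.norm_le_seminorm ℝ s

theorem integrable_pow_mul_norm_sq (φ : 𝓢(ℝ, ℂ)) (k : ℕ) :
    Integrable fun s : ℝ => s ^ k * ‖φ s‖ ^ 2 := by
  simpa only [sq] using integrable_pow_mul_norm_mul_norm φ φ k

theorem integrable_pow_mul_norm_deriv_sq (φ : 𝓢(ℝ, ℂ)) (k : ℕ) :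
    Integrable fun s : ℝ => s ^ k * ‖deriv φ s‖ ^ 2 :=
  integrable_pow_mul_norm_sq (SchwartzMap.derivCLM ℝ ℂ φ) k

theorem integrable_pow_mul_norm_mul_norm_deriv (φ : 𝓢(ℝ, ℂ)) (k : ℕ) :
    Integrable fun s : ℝ => s ^ k * (2 * (‖φ s‖ * ‖deriv φ s‖)) := by
  have hint : Integrable fun s : ℝ => 2 * (s ^ k * (‖φ s‖ * ‖deriv φ s‖)) :=
    (integrable_pow_mul_norm_mul_norm φ (SchwartzMap.derivCLM ℝ ℂ φ) k).const_mul 2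
  simpa only [mul_left_comm] using hint

theorem continuous_deriv_schwartz (φ : 𝓢(ℝ, ℂ)) : Continuous (deriv φ) :=
  (SchwartzMap.derivCLM ℝ ℂ φ).continuous

/-- The squared energy norm of `φ` on the half-line for the measure `s ^ d ds`, adapted to
functions oscillating at frequencies at most `R`. -/
def rayEnergy (d : ℕ) (R : ℝ) (φ : ℝ → ℂ) : ℝ :=
  ∫ s in Set.Ioi 0, s ^ d * (R * ‖φ s‖ ^ 2 + R⁻¹ * ‖deriv φ s‖ ^ 2)

variable {R : ℝ}

theorem rayEnergy_nonneg (d : ℕ) (hR : 0 ≤ R) (φ : ℝ → ℂ) : 0 ≤ rayEnergy d R φ :=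
  setIntegral_nonneg measurableSet_Ioi fun s (hs : 0 < s) => by positivity

theorem integrable_rayEnergy (φ : 𝓢(ℝ, ℂ)) (d : ℕ) (R : ℝ) :
    Integrable fun s : ℝ => s ^ d * (R * ‖φ s‖ ^ 2 + R⁻¹ * ‖deriv φ s‖ ^ 2) := by
  refine (((integrable_pow_mul_norm_sq φ d).const_mul R).add
    ((integrable_pow_mul_norm_deriv_sq φ d).const_mul R⁻¹)).congr (.of_forall fun s => ?_)
  simp only [Pi.add_apply]
  ring

theorem integral_pow_mul_norm_deriv_sq_le (φ : 𝓢(ℝ, ℂ)) (d : ℕ) (hR : 0 < R) :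
    ∫ s in Set.Ioi 0, s ^ d * ‖deriv φ s‖ ^ 2 ≤ R * rayEnergy d R φ := by
  rw [rayEnergy, ← integral_const_mul]
  refine setIntegral_mono_on (integrable_pow_mul_norm_deriv_sq φ d).integrableOn
    ((integrable_rayEnergy φ d R).const_mul R).integrableOn measurableSet_Ioi
    fun s (hs : 0 < s) => ?_
  have : 0 ≤ s ^ d * (R ^ 2 * ‖φ s‖ ^ 2) := by positivity
  calc s ^ d * ‖deriv φ s‖ ^ 2
      ≤ s ^ d * (R ^ 2 * ‖φ s‖ ^ 2) + s ^ d * ‖deriv φ s‖ ^ 2 := by linarith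
    _ = _ := by field_simp

theorem integral_pow_mul_norm_mul_norm_deriv_le (φ : 𝓢(ℝ, ℂ)) (d : ℕ) (hR : 0 < R) :
    ∫ s in Set.Ioi 0, s ^ d * (2 * (‖φ s‖ * ‖deriv φ s‖)) ≤ rayEnergy d R φ := by
  refine setIntegral_mono_on (integrable_pow_mul_norm_mul_norm_deriv φ d).integrableOn
    (integrable_rayEnergy φ d R).integrableOn measurableSet_Ioi fun s (hs : 0 < s) => ?_
  gcongr
  have hsq : R * ‖φ s‖ ^ 2 + R⁻¹ * ‖deriv φ s‖ ^ 2 - 2 * (‖φ s‖ * ‖deriv φ s‖) =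
      R⁻¹ * (R * ‖φ s‖ - ‖deriv φ s‖) ^ 2 := by field_simp; ring
  have : 0 ≤ R⁻¹ * (R * ‖φ s‖ - ‖deriv φ s‖) ^ 2 := by positivity
  linarith

theorem integral_pow_mul_norm_sq_le (φ : 𝓢(ℝ, ℂ)) (d : ℕ) (hR : 1 ≤ R) :
    ∫ s in Set.Ioi 0, s ^ d * ‖φ s‖ ^ 2 ≤ rayEnergy d R φ := by
  refine setIntegral_mono_on (integrable_pow_mul_norm_sq φ d).integrableOn
    (integrable_rayEnergy φ d R).integrableOn measurableSet_Ioi fun s (hs : 0 < s) => ?_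
  gcongr
  exact (le_mul_of_one_le_left (by positivity) hR).trans
    (le_add_of_nonneg_right (by positivity))

theorem abs_two_mul_inner_le (z w : ℂ) : |2 * ⟪z, w⟫| ≤ 2 * (‖z‖ * ‖w‖) := by
  rw [abs_mul, abs_two]
  exact mul_le_mul_of_nonneg_left (abs_real_inner_le_norm z w) zero_le_two

theorem integrable_pow_mul_inner_deriv (φ : 𝓢(ℝ, ℂ)) (k : ℕ) :
    Integrable fun s : ℝ => s ^ k * (2 * ⟪φ s, deriv φ s⟫) := by
  refine (integrable_pow_mul_norm_mul_norm_deriv φ k).norm.mono'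
    ((continuous_pow k).mul (continuous_const.mul
      (φ.continuous.inner (continuous_deriv_schwartz φ)))).aestronglyMeasurable
    (.of_forall fun s => ?_)
  rw [norm_mul, norm_mul (s ^ k)]
  gcongr
  exact (abs_two_mul_inner_le _ _).trans (le_abs_self _)

theorem pow_mul_norm_sq_le_rayEnergy (φ : 𝓢(ℝ, ℂ)) (d : ℕ) (hR : 0 < R) {r : ℝ} (hr : 0 ≤ r) :
    r ^ d * ‖φ r‖ ^ 2 ≤ rayEnergy d R φ := by
  have hderiv : ∀ s ∈ Set.Ioi r, HasDerivAt (fun s => ‖φ s‖ ^ 2) (2 * ⟪φ s, deriv φ s⟫) s :=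
    fun s _ => (φ.hasDerivAt s).norm_sq
  have hint : IntegrableOn (fun s : ℝ => 2 * ⟪φ s, deriv φ s⟫) (Set.Ioi r) := by
    simpa only [pow_zero, one_mul] using (integrable_pow_mul_inner_deriv φ 0).integrableOn
  have hint' : IntegrableOn (fun s : ℝ => ‖φ s‖ ^ 2) (Set.Ioi r) := by
    simpa only [pow_zero, one_mul] using (integrable_pow_mul_norm_sq φ 0).integrableOn
  have hFTC := integral_Ioi_of_hasDerivAt_of_tendsto
    (f := fun s => ‖φ s‖ ^ 2)
    (φ.continuous.norm.pow 2).continuousWithinAt hderiv hint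
    (tendsto_zero_of_hasDerivAt_of_integrableOn_Ioi hderiv hint hint')
  have hw := (integrable_pow_mul_norm_mul_norm_deriv φ d).integrableOn (s := Set.Ioi 0)
  have hsub : Set.Ioi r ⊆ Set.Ioi 0 := Set.Ioi_subset_Ioi hr
  calc r ^ d * ‖φ r‖ ^ 2 = ∫ s in Set.Ioi r, r ^ d * -(2 * ⟪φ s, deriv φ s⟫) := by
        rw [integral_const_mul, integral_neg, hFTC, zero_sub, neg_neg]
    _ ≤ ∫ s in Set.Ioi r, s ^ d * (2 * (‖φ s‖ * ‖deriv φ s‖)) := by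
        refine setIntegral_mono_on (hint.neg.const_mul _) (hw.mono_set hsub) measurableSet_Ioi
          fun s (hs : r < s) => ?_
        have : 0 ≤ s := hr.trans hs.le
        calc r ^ d * -(2 * ⟪φ s, deriv φ s⟫) ≤ r ^ d * (2 * (‖φ s‖ * ‖deriv φ s‖)) := by
              gcongr
              exact (neg_le_abs _).trans (abs_two_mul_inner_le _ _)
          _ ≤ s ^ d * (2 * (‖φ s‖ * ‖deriv φ s‖)) := by gcongr
    _ ≤ ∫ s in Set.Ioi 0, s ^ d * (2 * (‖φ s‖ * ‖deriv φ s‖)) :=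
        setIntegral_mono_set hw (ae_restrict_of_forall_mem measurableSet_Ioi
          fun s (hs : 0 < s) => by positivity) (Filter.Eventually.of_forall hsub)
    _ ≤ rayEnergy d R φ := integral_pow_mul_norm_mul_norm_deriv_le φ d hR

/-- Hardy's inequality. -/
theorem integral_pow_mul_norm_sq_le_rayEnergy_succ (φ : 𝓢(ℝ, ℂ)) (d : ℕ) (hR : 0 < R) :
    ∫ s in Set.Ioi 0, s ^ d * ‖φ s‖ ^ 2 ≤ rayEnergy (d + 1) R φ := by
  have hderiv : ∀ s ∈ Set.Ioi (0 : ℝ), HasDerivAt (fun s => s ^ (d + 1) * ‖φ s‖ ^ 2)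
      ((d + 1) * (s ^ d * ‖φ s‖ ^ 2) + s ^ (d + 1) * (2 * ⟪φ s, deriv φ s⟫)) s := fun s _ => by
    refine ((hasDerivAt_pow (d + 1) s).mul (φ.hasDerivAt s).norm_sq).congr_deriv ?_
    push_cast
    ring
  have hsq := ((integrable_pow_mul_norm_sq φ d).const_mul ((d : ℝ) + 1)).integrableOn
    (s := Set.Ioi 0)
  have hinner := (integrable_pow_mul_inner_deriv φ (d + 1)).integrableOn (s := Set.Ioi 0)
  have hFTC := integral_Ioi_of_hasDerivAt_of_tendsto (f := fun s => s ^ (d + 1) * ‖φ s‖ ^ 2)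
    ((continuous_pow _).mul (φ.continuous.norm.pow 2)).continuousWithinAt hderiv
    (hsq.add hinner) (tendsto_zero_of_hasDerivAt_of_integrableOn_Ioi hderiv (hsq.add hinner)
      (integrable_pow_mul_norm_sq φ (d + 1)).integrableOn)
  rw [integral_add hsq hinner, integral_const_mul, zero_pow (Nat.add_one_ne_zero d), zero_mul,
    sub_zero] at hFTC
  calc ∫ s in Set.Ioi 0, s ^ d * ‖φ s‖ ^ 2
      ≤ (d + 1) * ∫ s in Set.Ioi 0, s ^ d * ‖φ s‖ ^ 2 :=
        le_mul_of_one_le_left (setIntegral_nonneg measurableSet_Ioi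
          fun s (hs : 0 < s) => by positivity) (le_add_of_nonneg_left d.cast_nonneg)
    _ = ∫ s in Set.Ioi 0, -(s ^ (d + 1) * (2 * ⟪φ s, deriv φ s⟫)) := by
        rw [integral_neg]; exact eq_neg_of_add_eq_zero_left hFTC
    _ ≤ ∫ s in Set.Ioi 0, s ^ (d + 1) * (2 * (‖φ s‖ * ‖deriv φ s‖)) := by
        refine setIntegral_mono_on hinner.neg
          (integrable_pow_mul_norm_mul_norm_deriv φ (d + 1)).integrableOn measurableSet_Ioi
          fun s (hs : 0 < s) => ?_
        rw [← mul_neg]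
        gcongr
        exact (neg_le_abs _).trans (abs_two_mul_inner_le _ _)
    _ ≤ rayEnergy (d + 1) R φ := integral_pow_mul_norm_mul_norm_deriv_le φ (d + 1) hR

theorem sq_intervalIntegral_le {f : ℝ → ℝ} (hf : Continuous f) {a b : ℝ} (hab : a ≤ b) :
    (∫ s in a..b, f s) ^ 2 ≤ (b - a) * ∫ s in a..b, f s ^ 2 := by
  rcases hab.eq_or_lt with rfl | hlt
  · simp
  have hba : 0 < b - a := sub_pos.2 hlt
  set I := ∫ s in a..b, f s
  have hvar : ∫ s in a..b, ((b - a) * f s - I) ^ 2 =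
      (b - a) * ((b - a) * (∫ s in a..b, f s ^ 2) - I ^ 2) := by
    have hsq : IntervalIntegrable (fun s => (b - a) ^ 2 * f s ^ 2) volume a b :=
      (continuous_const.mul (hf.pow 2)).intervalIntegrable a b
    have hlin : IntervalIntegrable (fun s => 2 * (b - a) * I * f s) volume a b :=
      (continuous_const.mul hf).intervalIntegrable a b
    have hexp (s : ℝ) : ((b - a) * f s - I) ^ 2 =
        (b - a) ^ 2 * f s ^ 2 - 2 * (b - a) * I * f s + I ^ 2 := by ring
    simp only [hexp]
    rw [intervalIntegral.integral_add (hsq.sub hlin) intervalIntegrable_const,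
      intervalIntegral.integral_sub hsq hlin, intervalIntegral.integral_const_mul,
      intervalIntegral.integral_const_mul, intervalIntegral.integral_const, smul_eq_mul]
    ring
  have hnonneg : 0 ≤ ∫ s in a..b, ((b - a) * f s - I) ^ 2 :=
    intervalIntegral.integral_nonneg hab fun s _ => sq_nonneg _
  rw [hvar] at hnonneg
  linarith [nonneg_of_mul_nonneg_right hnonneg hba]

theorem pow_mul_norm_sub_sq_le (φ : 𝓢(ℝ, ℂ)) (d : ℕ) (hR : 0 < R) {a b r : ℝ} (hr : 0 ≤ r)
    (hra : r ≤ a) (hab : a ≤ b) :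
    r ^ d * ‖φ b - φ a‖ ^ 2 ≤ (b - a) * (R * rayEnergy d R φ) := by
  have hc := continuous_deriv_schwartz φ
  have hD := (integrable_pow_mul_norm_deriv_sq φ d).integrableOn (s := Set.Ioi 0)
  have hsub : Set.Ioc a b ⊆ Set.Ioi 0 := fun s hs => Set.mem_Ioi.2 (by linarith [hs.1])
  have hmono : r ^ d * ∫ s in a..b, ‖deriv φ s‖ ^ 2 ≤
      ∫ s in Set.Ioi 0, s ^ d * ‖deriv φ s‖ ^ 2 := by
    rw [← intervalIntegral.integral_const_mul, intervalIntegral.integral_of_le hab]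
    have hcont : Continuous fun s => r ^ d * ‖deriv φ s‖ ^ 2 := by fun_prop
    refine (setIntegral_mono_on hcont.integrableOn_Ioc (hD.mono_set hsub)
      measurableSet_Ioc fun s hs => ?_).trans
      (setIntegral_mono_set hD (ae_restrict_of_forall_mem measurableSet_Ioi
        fun s (hs : 0 < s) => by positivity) (Filter.Eventually.of_forall hsub))
    have := hra.trans hs.1.le
    gcongr
  calc r ^ d * ‖φ b - φ a‖ ^ 2 ≤ r ^ d * (∫ s in a..b, ‖deriv φ s‖) ^ 2 := by
        rw [← intervalIntegral.integral_eq_sub_of_hasDerivAt (fun s _ => φ.hasDerivAt s)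
          (hc.intervalIntegrable a b)]
        gcongr
        exact intervalIntegral.norm_integral_le_integral_norm hab
    _ ≤ r ^ d * ((b - a) * ∫ s in a..b, ‖deriv φ s‖ ^ 2) := by
        gcongr
        exact sq_intervalIntegral_le hc.norm hab
    _ = (b - a) * (r ^ d * ∫ s in a..b, ‖deriv φ s‖ ^ 2) := by ring
    _ ≤ (b - a) * (R * rayEnergy d R φ) :=
        mul_le_mul_of_nonneg_left (hmono.trans (integral_pow_mul_norm_deriv_sq_le φ d hR))
          (sub_nonneg.2 hab)

end RayEnergy

section RayProduct

theorem mul_mul_le_mul_add_div_two {p x y T E E' : ℝ} (hp : 0 ≤ p) (hT : 0 ≤ T) (hE : 0 ≤ E)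
    (hx : p * x ^ 2 ≤ T ^ 2 * E) (hy : p * y ^ 2 ≤ E') :
    p * (x * y) ≤ T * ((E + E') / 2) := by
  have hE' : 0 ≤ E' := (mul_nonneg hp (sq_nonneg y)).trans hy
  refine (abs_le_of_sq_le_sq' ?_ (by positivity)).2
  calc (p * (x * y)) ^ 2 = p * x ^ 2 * (p * y ^ 2) := by ring
    _ ≤ T ^ 2 * E * E' := mul_le_mul hx hy (by positivity) (by positivity)
    _ ≤ T ^ 2 * E * E' + T ^ 2 * ((E - E') / 2) ^ 2 := le_add_of_nonneg_right (by positivity)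
    _ = (T * ((E + E') / 2)) ^ 2 := by ring

variable {R R' : ℝ}

theorem pow_mul_norm_sub_mul_norm_le (φ ψ : 𝓢(ℝ, ℂ)) (d : ℕ) (hR : 0 < R) (hR' : 1 ≤ R')
    {a b c r : ℝ} (hr : 0 ≤ r) (hra : r ≤ a) (hab : a ≤ b) (hrc : r ≤ c) :
    r ^ d * (‖φ b - φ a‖ * ‖ψ c‖) ≤
      √(R * R' * (b - a)) * ((rayEnergy d R φ + rayEnergy d R' ψ) / 2) := by
  have hE := rayEnergy_nonneg d hR.le φ
  have hba : 0 ≤ b - a := sub_nonneg.2 hab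
  refine mul_mul_le_mul_add_div_two (by positivity) (sqrt_nonneg _) hE ?_ ?_
  · rw [sq_sqrt (by positivity)]
    calc r ^ d * ‖φ b - φ a‖ ^ 2 ≤ (b - a) * (R * rayEnergy d R φ) :=
          pow_mul_norm_sub_sq_le φ d hR hr hra hab
      _ ≤ R' * ((b - a) * (R * rayEnergy d R φ)) := le_mul_of_one_le_left (by positivity) hR'
      _ = R * R' * (b - a) * rayEnergy d R φ := by ring
  · calc r ^ d * ‖ψ c‖ ^ 2 ≤ c ^ d * ‖ψ c‖ ^ 2 := by gcongr
      _ ≤ rayEnergy d R' ψ := pow_mul_norm_sq_le_rayEnergy ψ d (by linarith) (hr.trans hrc)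

theorem pow_mul_norm_mul_conj_sub_le (φ ψ : 𝓢(ℝ, ℂ)) (d : ℕ) (hR : 1 ≤ R) (hR' : 1 ≤ R')
    {a b r : ℝ} (hr : 0 ≤ r) (hra : r ≤ a) (hrb : r ≤ b) :
    r ^ d * ‖φ b * conj (ψ b) - φ a * conj (ψ a)‖ ≤
      √(R * R' * |b - a|) * (rayEnergy d R φ + rayEnergy d R' ψ) := by
  wlog hab : a ≤ b generalizing a b
  · rw [norm_sub_rev, abs_sub_comm]
    exact this hrb hra (le_of_not_ge hab)
  rw [abs_of_nonneg (sub_nonneg.2 hab)]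
  calc r ^ d * ‖φ b * conj (ψ b) - φ a * conj (ψ a)‖
      = r ^ d * ‖(φ b - φ a) * conj (ψ b) + conj (ψ b - ψ a) * φ a‖ := by
        rw [map_sub]; ring_nf
    _ ≤ r ^ d * (‖φ b - φ a‖ * ‖ψ b‖) + r ^ d * (‖ψ b - ψ a‖ * ‖φ a‖) := by
        rw [← mul_add]
        gcongr
        refine (norm_add_le _ _).trans_eq ?_
        rw [norm_mul, norm_mul, RCLike.norm_conj, RCLike.norm_conj]
    _ ≤ √(R * R' * (b - a)) * ((rayEnergy d R φ + rayEnergy d R' ψ) / 2) +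
          √(R' * R * (b - a)) * ((rayEnergy d R' ψ + rayEnergy d R φ) / 2) :=
        add_le_add (pow_mul_norm_sub_mul_norm_le φ ψ d (by linarith) hR' hr hra hab hrb)
          (pow_mul_norm_sub_mul_norm_le ψ φ d (by linarith) hR hr hra hab hra)
    _ = √(R * R' * (b - a)) * (rayEnergy d R φ + rayEnergy d R' ψ) := by
        rw [mul_comm R' R]; ring

theorem pow_mul_norm_mul_norm_le (φ ψ : 𝓢(ℝ, ℂ)) (d : ℕ) (hR : 0 < R) (hR' : 0 < R')
    {r : ℝ} (hr : 0 ≤ r) :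
    r ^ d * (‖φ r‖ * ‖ψ r‖) ≤ rayEnergy d R φ + rayEnergy d R' ψ := by
  have hE := rayEnergy_nonneg d hR.le φ
  have hE' := rayEnergy_nonneg d hR'.le ψ
  have h := mul_mul_le_mul_add_div_two (x := ‖φ r‖) (T := 1) (by positivity) zero_le_one hE
    (by rw [one_pow, one_mul]; exact pow_mul_norm_sq_le_rayEnergy φ d hR hr)
    (pow_mul_norm_sq_le_rayEnergy ψ d hR' hr)
  linarith

theorem integral_pow_mul_norm_mul_norm_le (φ ψ : 𝓢(ℝ, ℂ)) (k : ℕ) :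
    ∫ s in Set.Ioi 0, s ^ k * (‖φ s‖ * ‖ψ s‖) ≤
      ((∫ s in Set.Ioi 0, s ^ k * ‖φ s‖ ^ 2) + ∫ s in Set.Ioi 0, s ^ k * ‖ψ s‖ ^ 2) / 2 := by
  have hφ := (integrable_pow_mul_norm_sq φ k).integrableOn (s := Set.Ioi 0)
  have hψ := (integrable_pow_mul_norm_sq ψ k).integrableOn (s := Set.Ioi 0)
  rw [← integral_add hφ hψ, ← integral_div]
  refine setIntegral_mono_on (integrable_pow_mul_norm_mul_norm φ ψ k).integrableOn
    ((hφ.add hψ).div_const 2) measurableSet_Ioi fun s (hs : 0 < s) => ?_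
  rw [← mul_add, mul_div_assoc]
  gcongr
  linarith [two_mul_le_add_sq ‖φ s‖ ‖ψ s‖]

theorem integral_one_add_inv_mul_pow_mul_norm_mul_norm_le (φ ψ : 𝓢(ℝ, ℂ)) (d : ℕ) (hR : 1 ≤ R)
    (hR' : 1 ≤ R') :
    ∫ s in Set.Ioi 0, (s ^ (d + 1) * (‖φ s‖ * ‖ψ s‖) + s ^ d * (‖φ s‖ * ‖ψ s‖)) ≤
      rayEnergy (d + 1) R φ + rayEnergy (d + 1) R' ψ := by
  rw [integral_add (integrable_pow_mul_norm_mul_norm φ ψ _).integrableOn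
    (integrable_pow_mul_norm_mul_norm φ ψ _).integrableOn]
  linarith [integral_pow_mul_norm_mul_norm_le φ ψ (d + 1),
    integral_pow_mul_norm_mul_norm_le φ ψ d,
    integral_pow_mul_norm_sq_le φ (d + 1) hR, integral_pow_mul_norm_sq_le ψ (d + 1) hR',
    integral_pow_mul_norm_sq_le_rayEnergy_succ φ d (zero_lt_one.trans_le hR),
    integral_pow_mul_norm_sq_le_rayEnergy_succ ψ d (zero_lt_one.trans_le hR')]

theorem abs_pow_succ_sub_pow_succ_le {s s₀ : ℝ} (d : ℕ) (hs₀ : 0 < s₀)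
    (hs : |s - s₀| ≤ s₀ / 2) :
    |s ^ (d + 1) - s₀ ^ (d + 1)| ≤ (d + 1) * 3 ^ (d + 1) * (|s - s₀| / s₀ * s₀ ^ (d + 1)) := by
  have hmax : max |s| |s₀| ≤ 3 * s₀ := by
    obtain ⟨hs1, hs2⟩ := abs_le.1 hs
    rw [abs_of_pos hs₀, abs_of_pos (by linarith)]
    exact max_le (by linarith) (by linarith)
  calc |s ^ (d + 1) - s₀ ^ (d + 1)| ≤ |s - s₀| * (d + 1 : ℕ) * max |s| |s₀| ^ d :=
        abs_pow_sub_pow_le s s₀ (d + 1)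
    _ ≤ |s - s₀| * (d + 1 : ℕ) * (3 * s₀) ^ d := by gcongr
    _ = (d + 1) * 3 ^ d * (|s - s₀| / s₀ * s₀ ^ (d + 1)) := by
        push_cast; field_simp; ring
    _ ≤ (d + 1) * 3 ^ (d + 1) * (|s - s₀| / s₀ * s₀ ^ (d + 1)) := by
        gcongr <;> norm_num

theorem norm_pow_mul_sub_pow_mul_le {P : ℝ → ℂ} {d : ℕ} {Q S s s₀ : ℝ} (hs₀ : 0 < s₀)
    (hs : |s - s₀| ≤ s₀ / 2) (hP₀ : s₀ ^ (d + 1) * ‖P s₀‖ ≤ Q)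
    (hP : (s₀ / 2) ^ (d + 1) * ‖P s - P s₀‖ ≤ √(S * |s - s₀|) * Q) :
    ‖((s ^ (d + 1) : ℝ) : ℂ) * P s - ((s₀ ^ (d + 1) : ℝ) : ℂ) * P s₀‖ ≤
      (d + 1) * 3 ^ (d + 1) * Q * (√(S * |s - s₀|) + |s - s₀| / s₀) := by
  have hs' : 0 ≤ s ∧ s ≤ 3 * (s₀ / 2) := by
    obtain ⟨hs1, hs2⟩ := abs_le.1 hs
    constructor <;> linarith
  have hpow := pow_le_pow_left₀ hs'.1 hs'.2 (d + 1)
  have hQ : 0 ≤ √(S * |s - s₀|) * Q := le_trans (by positivity) hP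
  calc ‖((s ^ (d + 1) : ℝ) : ℂ) * P s - ((s₀ ^ (d + 1) : ℝ) : ℂ) * P s₀‖
      = ‖((s ^ (d + 1) : ℝ) : ℂ) * (P s - P s₀) +
          ((s ^ (d + 1) - s₀ ^ (d + 1) : ℝ) : ℂ) * P s₀‖ := by push_cast; ring_nf
    _ ≤ s ^ (d + 1) * ‖P s - P s₀‖ + |s ^ (d + 1) - s₀ ^ (d + 1)| * ‖P s₀‖ := by
        refine (norm_add_le _ _).trans_eq ?_
        rw [norm_mul, norm_mul, norm_real, norm_real, Real.norm_of_nonneg (pow_nonneg hs'.1 _),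
          Real.norm_eq_abs]
    _ ≤ (3 * (s₀ / 2)) ^ (d + 1) * ‖P s - P s₀‖ +
          (d + 1) * 3 ^ (d + 1) * (|s - s₀| / s₀ * s₀ ^ (d + 1)) * ‖P s₀‖ := by
        gcongr
        exact abs_pow_succ_sub_pow_succ_le d hs₀ hs
    _ = 3 ^ (d + 1) * ((s₀ / 2) ^ (d + 1) * ‖P s - P s₀‖) +
          (d + 1) * 3 ^ (d + 1) * (|s - s₀| / s₀ * (s₀ ^ (d + 1) * ‖P s₀‖)) := by
        rw [mul_pow]; ring
    _ ≤ (d + 1) * 3 ^ (d + 1) * (√(S * |s - s₀|) * Q) +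
          (d + 1) * 3 ^ (d + 1) * (|s - s₀| / s₀ * Q) := by
        gcongr
        exact le_mul_of_one_le_left (by positivity) (le_add_of_nonneg_left d.cast_nonneg)
    _ = _ := by ring

theorem halfLineBound_pow_mul_mul_conj (φ ψ : 𝓢(ℝ, ℂ)) (d : ℕ) (hR : 1 ≤ R) (hR' : 1 ≤ R') :
    HalfLineBound ((d + 1) * 3 ^ (d + 1)) (R * R')
      (rayEnergy (d + 1) R φ + rayEnergy (d + 1) R' ψ)
      fun s => ((s ^ (d + 1) : ℝ) : ℂ) * (φ s * conj (ψ s)) := by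
  have hR₀ : 0 < R := zero_lt_one.trans_le hR
  have hR₀' : 0 < R' := zero_lt_one.trans_le hR'
  have hnorm : ∀ s : ℝ, 0 < s → ‖((s ^ (d + 1) : ℝ) : ℂ) * (φ s * conj (ψ s))‖ =
      s ^ (d + 1) * (‖φ s‖ * ‖ψ s‖) := fun s hs => by
    rw [norm_mul, norm_real, Real.norm_of_nonneg (by positivity), norm_mul, RCLike.norm_conj]
  have hweight : ∀ s ∈ Set.Ioi (0 : ℝ),
      s ^ (d + 1) * (‖φ s‖ * ‖ψ s‖) + s ^ d * (‖φ s‖ * ‖ψ s‖) =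
        (1 + s⁻¹) * ‖((s ^ (d + 1) : ℝ) : ℂ) * (φ s * conj (ψ s))‖ := fun s hs => by
    have hs : 0 < s := hs
    rw [hnorm s hs]
    field_simp
    ring
  refine ⟨?_, fun s hs => ?_, ?_, ?_, fun s₀ s hs₀ hs => ?_⟩
  · exact (continuous_ofReal.comp (continuous_pow _)).mul
      (φ.continuous.mul (continuous_conj.comp ψ.continuous))
  · rw [hnorm s hs]
    exact pow_mul_norm_mul_norm_le φ ψ _ hR₀ hR₀' hs.le
  · exact IntegrableOn.congr_fun ((integrable_pow_mul_norm_mul_norm φ ψ _).add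
      (integrable_pow_mul_norm_mul_norm φ ψ _)).integrableOn hweight measurableSet_Ioi
  · rw [← setIntegral_congr_fun measurableSet_Ioi hweight]
    exact integral_one_add_inv_mul_pow_mul_norm_mul_norm_le φ ψ d hR hR'
  · have hle := (abs_le.1 hs).1
    refine norm_pow_mul_sub_pow_mul_le (P := fun s => φ s * conj (ψ s)) hs₀ hs ?_
      (pow_mul_norm_mul_conj_sub_le φ ψ _ hR hR' (by linarith) (by linarith) (by linarith))
    rw [norm_mul, RCLike.norm_conj]
    exact pow_mul_norm_mul_norm_le φ ψ _ hR₀ hR₀' hs₀.le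

end RayProduct

section Polar

variable {E F : Type*} [NormedAddCommGroup E] [NormedSpace ℝ E]

theorem comp_polar_homeomorphUnitSphereProd (f : E → F) :
    (fun p : Metric.sphere (0 : E) 1 × Set.Ioi (0 : ℝ) => f (p.2.1 • p.1.1)) ∘
      homeomorphUnitSphereProd E = f ∘ Subtype.val := by
  funext x
  rw [Function.comp_apply, ← homeomorphUnitSphereProd_symm_apply_coe,
    Homeomorph.symm_apply_apply, Function.comp_apply]

variable [FiniteDimensional ℝ E] [Nontrivial E] [MeasurableSpace E] [BorelSpace E]
  [NormedAddCommGroup F] {μ : Measure E} [μ.IsAddHaarMeasure] {f : E → F}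

theorem integrable_polar (hf : Integrable f μ) :
    Integrable (fun p : Metric.sphere (0 : E) 1 × Set.Ioi (0 : ℝ) => f (p.2.1 • p.1.1))
      (μ.toSphere.prod (Measure.volumeIoiPow (Module.finrank ℝ E - 1))) := by
  rw [← μ.measurePreserving_homeomorphUnitSphereProd.integrable_comp_emb
    (Homeomorph.measurableEmbedding _), comp_polar_homeomorphUnitSphereProd]
  rwa [← restrict_compl_singleton (μ := μ) 0, ← IntegrableOn,
    integrableOn_iff_comap_subtypeVal (measurableSet_singleton _).compl] at hf

variable [NormedSpace ℝ F]

theorem integral_volumeIoiPow (k : ℕ) (g : ℝ → F) :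
    ∫ r, g r ∂(Measure.volumeIoiPow k) = ∫ r in Set.Ioi 0, r ^ k • g r := by
  rw [Measure.volumeIoiPow, integral_withDensity_eq_integral_toReal_smul (by fun_prop)
    (.of_forall fun _ => ENNReal.ofReal_lt_top), ← integral_subtype_comap measurableSet_Ioi]
  congr 1 with r
  rw [ENNReal.toReal_ofReal (pow_nonneg r.2.le k)]

theorem integrable_volumeIoiPow_iff (k : ℕ) (g : ℝ → F) :
    Integrable (fun r : Set.Ioi (0 : ℝ) => g r) (Measure.volumeIoiPow k) ↔
      IntegrableOn (fun r => r ^ k • g r) (Set.Ioi 0) := by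
  rw [Measure.volumeIoiPow, integrable_withDensity_iff_integrable_smul' (by fun_prop)
    (.of_forall fun _ => ENNReal.ofReal_lt_top),
    integrableOn_iff_comap_subtypeVal measurableSet_Ioi]
  refine iff_of_eq (congrArg (Integrable · _) (funext fun r => ?_))
  rw [ENNReal.toReal_ofReal (pow_nonneg r.2.le k), Function.comp_apply]

theorem ae_integrableOn_polar (hf : Integrable f μ) :
    ∀ᵐ ω ∂μ.toSphere, IntegrableOn
      (fun r : ℝ => r ^ (Module.finrank ℝ E - 1) • f (r • ω.1)) (Set.Ioi 0) := by
  filter_upwards [(integrable_polar hf).prod_right_ae] with ω hω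
  exact (integrable_volumeIoiPow_iff _ fun r => f (r • ω.1)).1 hω

theorem integrable_integral_polar (hf : Integrable f μ) :
    Integrable (fun ω : Metric.sphere (0 : E) 1 =>
      ∫ r : ℝ in Set.Ioi 0, r ^ (Module.finrank ℝ E - 1) • f (r • ω.1)) μ.toSphere :=
  (integrable_polar hf).integral_prod_left.congr
    (.of_forall fun ω => integral_volumeIoiPow _ fun r => f (r • ω.1))

theorem integral_eq_integral_polar (hf : Integrable f μ) :
    ∫ x, f x ∂μ = ∫ ω, ∫ r : ℝ in Set.Ioi 0,
      r ^ (Module.finrank ℝ E - 1) • f (r • ω.1) ∂volume ∂μ.toSphere := by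
  calc
    ∫ x, f x ∂μ = ∫ x : ({(0)}ᶜ : Set E), f x.1 ∂(μ.comap (↑)) := by
      rw [integral_subtype_comap (measurableSet_singleton _).compl, restrict_compl_singleton]
    _ = ∫ p, f (p.2.1 • p.1.1)
        ∂(μ.toSphere.prod (Measure.volumeIoiPow (Module.finrank ℝ E - 1))) := by
      rw [← μ.measurePreserving_homeomorphUnitSphereProd.integral_comp
        (Homeomorph.measurableEmbedding _)]
      exact congrArg (integral _) (comp_polar_homeomorphUnitSphereProd f).symm
    _ = _ := by
      rw [integral_prod _ (integrable_polar hf)]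
      exact integral_congr_ae (.of_forall fun ω =>
        integral_volumeIoiPow _ fun r => f (r • ω.1))

theorem norm_integral_le_of_ae_norm_integral_ray_le {g : E → ℝ} (hf : Integrable f μ)
    (hg : Integrable g μ)
    (h : ∀ᵐ ω ∂μ.toSphere,
      ‖∫ r : ℝ in Set.Ioi 0, r ^ (Module.finrank ℝ E - 1) • f (r • ω.1)‖ ≤
        ∫ r : ℝ in Set.Ioi 0, r ^ (Module.finrank ℝ E - 1) • g (r • ω.1)) :
    ‖∫ x, f x ∂μ‖ ≤ ∫ x, g x ∂μ := by
  rw [integral_eq_integral_polar hf, integral_eq_integral_polar hg]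
  exact norm_integral_le_of_norm_le (integrable_integral_polar hg) h

end Polar

section Symbol

variable {E : Type*} [NormedAddCommGroup E] {a : E → ℝ} {c m t : ℝ} {ζ : ℂ}

/-- The symbol `|ξ| ^ (m - 1) / (ζ - a(ξ) ^ m)` of `|D| ^ (m - 1) (ζ - a(D) ^ m)⁻¹`. -/
def resolventSymbol (a : E → ℝ) (m : ℝ) (ζ : ℂ) (ξ : E) : ℂ :=
  ((‖ξ‖ ^ (m - 1) : ℝ) : ℂ) * (ζ - ((a ξ ^ m : ℝ) : ℂ))⁻¹

theorem measurable_resolventSymbol [MeasurableSpace E] [OpensMeasurableSpace E]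
    (ha : Measurable a) (m : ℝ) (ζ : ℂ) : Measurable (resolventSymbol a m ζ) := by
  unfold resolventSymbol
  fun_prop

theorem norm_resolventSymbol_le (hc : 0 < c) (hca : ∀ ξ, c * ‖ξ‖ ≤ a ξ) (hm : 1 ≤ m)
    (hζ : ζ.im ≠ 0) (ξ : E) :
    ‖resolventSymbol a m ζ ξ‖ ≤ c⁻¹ ^ (m - 1) * ((1 + ‖ζ‖) / |ζ.im| + 1) := by
  have ha : 0 ≤ a ξ := le_trans (by positivity) (hca ξ)
  have hle : ‖ξ‖ ^ (m - 1) ≤ c⁻¹ ^ (m - 1) * a ξ ^ (m - 1) := by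
    rw [← mul_rpow (by positivity) ha]
    exact rpow_le_rpow (norm_nonneg ξ) ((le_inv_mul_iff₀ hc).2 (hca ξ)) (sub_nonneg.2 hm)
  calc ‖resolventSymbol a m ζ ξ‖ = ‖ξ‖ ^ (m - 1) / ‖ζ - ((a ξ ^ m : ℝ) : ℂ)‖ := by
        rw [resolventSymbol, norm_mul, norm_inv, norm_real, Real.norm_of_nonneg (by positivity),
          div_eq_mul_inv]
    _ ≤ c⁻¹ ^ (m - 1) * a ξ ^ (m - 1) / ‖ζ - ((a ξ ^ m : ℝ) : ℂ)‖ := by gcongr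
    _ = c⁻¹ ^ (m - 1) * ‖radialKernel m ζ (a ξ)‖ := by rw [norm_radialKernel ha, mul_div_assoc]
    _ ≤ _ := by
        gcongr
        exact norm_radialKernel_le hm ha hζ

theorem memLp_top_resolventSymbol [MeasurableSpace E] [OpensMeasurableSpace E] {μ : Measure E}
    (ha : Measurable a) (hc : 0 < c) (hca : ∀ ξ, c * ‖ξ‖ ≤ a ξ) (hm : 1 ≤ m) (hζ : ζ.im ≠ 0) :
    MemLp (resolventSymbol a m ζ) ⊤ μ :=
  memLp_top_of_bound (measurable_resolventSymbol ha m ζ).aestronglyMeasurable _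
    (.of_forall (norm_resolventSymbol_le hc hca hm hζ))

variable [NormedSpace ℝ E]

theorem exists_le_of_homogeneous [FiniteDimensional ℝ E] (ha : Continuous a)
    (hhom : ∀ t : ℝ, 0 < t → ∀ ξ, a (t • ξ) = t * a ξ) (hpos : ∀ ξ, ξ ≠ 0 → 0 < a ξ) :
    ∃ c > 0, ∀ ξ, c * ‖ξ‖ ≤ a ξ := by
  have ha0 : a 0 = 0 := by
    have h := hhom 2 two_pos 0
    rw [smul_zero] at h
    linarith
  rcases subsingleton_or_nontrivial E with _ | _
  · exact ⟨1, one_pos, fun ξ => by rw [Subsingleton.elim ξ 0, ha0, norm_zero, mul_zero]⟩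
  obtain ⟨ω, hω, hmin⟩ := (isCompact_sphere (0 : E) 1).exists_isMinOn
    (NormedSpace.sphere_nonempty.2 zero_le_one) ha.continuousOn
  refine ⟨a ω, hpos ω (ne_zero_of_mem_unit_sphere ⟨ω, hω⟩), fun ξ => ?_⟩
  rcases eq_or_ne ξ 0 with rfl | hξ
  · rw [ha0, norm_zero, mul_zero]
  have hξ' : 0 < ‖ξ‖ := norm_pos_iff.2 hξ
  have hle : a ω ≤ a (‖ξ‖⁻¹ • ξ) := hmin (by simp [norm_smul, hξ'.ne'])
  rwa [hhom _ (inv_pos.2 hξ'), inv_mul_eq_div, le_div_iff₀ hξ'] at hle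

theorem resolventSymbol_smul (hhom : ∀ t : ℝ, 0 < t → ∀ ξ, a (t • ξ) = t * a ξ) (ht : 0 < t)
    {ξ : E} (haξ : 0 ≤ a ξ) :
    resolventSymbol a m ζ (t • ξ) =
      ((t⁻¹ : ℝ) : ℂ) * resolventSymbol a m (ζ * ((t ^ m)⁻¹ : ℝ)) ξ := by
  have htm : ((t ^ m : ℝ) : ℂ) ≠ 0 := ofReal_ne_zero.2 (by positivity)
  have hden : ζ * ((t ^ m : ℝ) : ℂ)⁻¹ - ((a ξ ^ m : ℝ) : ℂ) =
      ((t ^ m : ℝ) : ℂ)⁻¹ * (ζ - ((t ^ m : ℝ) : ℂ) * ((a ξ ^ m : ℝ) : ℂ)) := by field_simp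
  have hpow : t ^ (m - 1) = t⁻¹ * t ^ m := by
    rw [rpow_sub_one ht.ne', div_eq_inv_mul]
  rw [resolventSymbol, resolventSymbol, hhom t ht, norm_smul, Real.norm_of_nonneg ht.le,
    mul_rpow ht.le (norm_nonneg ξ), mul_rpow ht.le haξ, hpow]
  push_cast
  rw [hden, mul_inv, inv_inv]
  ring

theorem resolventSymbol_smul_unit (hhom : ∀ t : ℝ, 0 < t → ∀ ξ, a (t • ξ) = t * a ξ)
    {ω : E} (hω : ‖ω‖ = 1) (haω : 0 < a ω) {r : ℝ} (hr : 0 < r) :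
    resolventSymbol a m ζ (r • ω) =
      (((a ω ^ m)⁻¹ : ℝ) : ℂ) * radialKernel m (ζ * ((a ω ^ m)⁻¹ : ℝ)) r := by
  have ham : ((a ω ^ m : ℝ) : ℂ) ≠ 0 := ofReal_ne_zero.2 (by positivity)
  have hden : ζ * ((a ω ^ m : ℝ) : ℂ)⁻¹ - ((r ^ m : ℝ) : ℂ) =
      ((a ω ^ m : ℝ) : ℂ)⁻¹ * (ζ - ((r ^ m : ℝ) : ℂ) * ((a ω ^ m : ℝ) : ℂ)) := by field_simp
  rw [resolventSymbol, radialKernel, hhom r hr, norm_smul, hω, mul_one, Real.norm_of_nonneg hr.le,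
    mul_rpow hr.le haω.le]
  push_cast
  rw [hden, mul_inv, inv_inv, mul_left_comm, inv_mul_cancel_left₀ ham]

end Symbol

section Energy

variable {E : Type*} [NormedAddCommGroup E] [InnerProductSpace ℝ E] {R R' : ℝ}

/-- The restriction of a Schwartz function to the line spanned by a unit vector. -/
def schwartzRay (f : 𝓢(E, ℂ)) (ω : Metric.sphere (0 : E) 1) : 𝓢(ℝ, ℂ) :=
  SchwartzMap.compCLMOfAntilipschitz ℝ (K := 1)
    (ContinuousLinearMap.toSpanSingleton ℝ ω.1).hasTemperateGrowth
    (AntilipschitzWith.of_le_mul_dist fun x y => by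
      simp [dist_eq_norm, ← sub_smul, norm_smul]) f

theorem schwartzRay_apply (f : 𝓢(E, ℂ)) (ω : Metric.sphere (0 : E) 1) (r : ℝ) :
    schwartzRay f ω r = f (r • ω.1) := rfl

theorem norm_deriv_schwartzRay_le (f : 𝓢(E, ℂ)) (ω : Metric.sphere (0 : E) 1) (r : ℝ) :
    ‖deriv (schwartzRay f ω) r‖ ≤ ‖fderiv ℝ f (r • ω.1)‖ := by
  have hline : HasDerivAt (fun r : ℝ => r • ω.1) ω.1 r := by
    simpa using (hasDerivAt_id r).smul_const ω.1
  have hray : HasDerivAt (schwartzRay f ω) (fderiv ℝ f (r • ω.1) ω.1) r :=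
    (f.differentiableAt (x := r • ω.1)).hasFDerivAt.comp_hasDerivAt r hline
  rw [hray.deriv]
  simpa using (fderiv ℝ f (r • ω.1)).le_opNorm ω.1

variable {a : E → ℝ} {c m : ℝ} {ζ : ℂ}

theorem im_mul_inv_rpow_ne_zero {t : ℝ} (hζ : ζ.im ≠ 0) (ht : 0 < t) (m : ℝ) :
    (ζ * ((t ^ m)⁻¹ : ℝ)).im ≠ 0 := by
  rw [im_mul_ofReal]
  exact mul_ne_zero hζ (by positivity)

theorem norm_integral_resolventSymbol_ray_le
    (hhom : ∀ t : ℝ, 0 < t → ∀ ξ, a (t • ξ) = t * a ξ) (hc : 0 < c)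
    (hca : ∀ ξ, c * ‖ξ‖ ≤ a ξ) (hm : 1 ≤ m) (hζ : ζ.im ≠ 0) (hR : 1 ≤ R) (hR' : 1 ≤ R')
    (f g : 𝓢(E, ℂ)) (ω : Metric.sphere (0 : E) 1) (d : ℕ) :
    ‖∫ r : ℝ in Set.Ioi 0, r ^ (d + 1) •
        (resolventSymbol a m ζ (r • ω.1) * (f (r • ω.1) * conj (g (r • ω.1))))‖ ≤
      (c ^ m)⁻¹ * ((Real.log (m * 2 ^ (m - 1)) + 2 * π + 5 * ((d + 1) * 3 ^ (d + 1)) + 3) *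
        (1 + Real.log (R * R')) *
        (rayEnergy (d + 1) R (schwartzRay f ω) + rayEnergy (d + 1) R' (schwartzRay g ω))) := by
  have hω : ‖ω.1‖ = 1 := norm_eq_of_mem_sphere ω
  have hcω : c ≤ a ω := by simpa only [hω, mul_one] using hca ω
  have haω : 0 < a ω := hc.trans_le hcω
  have hkernel : ∫ r : ℝ in Set.Ioi 0, r ^ (d + 1) •
        (resolventSymbol a m ζ (r • ω.1) * (f (r • ω.1) * conj (g (r • ω.1)))) =
      (((a ω ^ m)⁻¹ : ℝ) : ℂ) * ∫ r : ℝ in Set.Ioi 0, radialKernel m (ζ * ((a ω ^ m)⁻¹ : ℝ)) r *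
        (((r ^ (d + 1) : ℝ) : ℂ) * (schwartzRay f ω r * conj (schwartzRay g ω r))) := by
    rw [← integral_const_mul]
    refine setIntegral_congr_fun measurableSet_Ioi fun r hr => ?_
    simp only [resolventSymbol_smul_unit hhom hω haω hr, schwartzRay_apply, real_smul]
    ring
  rw [hkernel, norm_mul, norm_real, Real.norm_of_nonneg (by positivity)]
  gcongr
  exact (halfLineBound_pow_mul_mul_conj _ _ d hR hR').norm_integral_radialKernel_mul_le hm
    (im_mul_inv_rpow_ne_zero hζ haω m) (by positivity) (one_le_mul_of_one_le_of_one_le hR hR')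

variable [FiniteDimensional ℝ E] [MeasurableSpace E] [BorelSpace E]

theorem integrable_norm_sq_schwartz (f : 𝓢(E, ℂ)) : Integrable fun x => ‖f x‖ ^ 2 :=
  (f.memLp 2 volume).integrable_norm_pow two_ne_zero

theorem integrable_norm_fderiv_sq_schwartz (f : 𝓢(E, ℂ)) :
    Integrable fun x => ‖fderiv ℝ f x‖ ^ 2 :=
  ((SchwartzMap.fderivCLM ℝ E ℂ f).memLp 2 volume).integrable_norm_pow two_ne_zero

theorem integrable_norm_mul_norm_schwartz (f g : 𝓢(E, ℂ)) :
    Integrable fun x => ‖f x‖ * ‖g x‖ :=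
  (f.memLp 2 volume).norm.integrable_mul (g.memLp 2 volume).norm

theorem integrable_mul_conj_schwartz (f g : 𝓢(E, ℂ)) :
    Integrable fun x => f x * conj (g x) :=
  (f.memLp 2 volume).integrable_mul (g.memLp 2 volume).star

/-- The squared energy norm of `f` on the whole space, the analogue of `rayEnergy`. -/
def energy (R : ℝ) (f : E → ℂ) : ℝ :=
  ∫ x, (R * ‖f x‖ ^ 2 + R⁻¹ * ‖fderiv ℝ f x‖ ^ 2)

theorem integrable_energy (f : 𝓢(E, ℂ)) (R : ℝ) :
    Integrable fun x => R * ‖f x‖ ^ 2 + R⁻¹ * ‖fderiv ℝ f x‖ ^ 2 :=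
  ((integrable_norm_sq_schwartz f).const_mul R).add
    ((integrable_norm_fderiv_sq_schwartz f).const_mul R⁻¹)

theorem ae_rayEnergy_le [Nontrivial E] (hR : 0 ≤ R) (f : 𝓢(E, ℂ)) :
    ∀ᵐ ω ∂(volume : Measure E).toSphere,
      rayEnergy (Module.finrank ℝ E - 1) R (schwartzRay f ω) ≤
        ∫ r : ℝ in Set.Ioi 0, r ^ (Module.finrank ℝ E - 1) •
          (R * ‖f (r • ω.1)‖ ^ 2 + R⁻¹ * ‖fderiv ℝ f (r • ω.1)‖ ^ 2) := by
  filter_upwards [ae_integrableOn_polar (integrable_energy f R)] with ω hω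
  refine setIntegral_mono_on (integrable_rayEnergy (schwartzRay f ω) _ R).integrableOn hω
    measurableSet_Ioi fun r (hr : 0 < r) => ?_
  rw [smul_eq_mul, schwartzRay_apply]
  gcongr
  exact norm_deriv_schwartzRay_le f ω r

theorem exists_norm_integral_resolventSymbol_le_energy (hE : 2 ≤ Module.finrank ℝ E)
    (ha : Measurable a) (hhom : ∀ t : ℝ, 0 < t → ∀ ξ, a (t • ξ) = t * a ξ) (hc : 0 < c)
    (hca : ∀ ξ, c * ‖ξ‖ ≤ a ξ) (hm : 1 ≤ m) :
    ∃ C > 0, ∀ ζ : ℂ, ζ.im ≠ 0 → ∀ f g : 𝓢(E, ℂ), ∀ R R' : ℝ, 1 ≤ R → 1 ≤ R' →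
      ‖∫ ξ, resolventSymbol a m ζ ξ * (f ξ * conj (g ξ))‖ ≤
        C * (1 + Real.log (R * R')) * (energy R f + energy R' g) := by
  obtain ⟨d, hd⟩ : ∃ d, Module.finrank ℝ E - 1 = d + 1 := ⟨Module.finrank ℝ E - 2, by omega⟩
  have : Nontrivial E := Module.nontrivial_of_finrank_pos (R := ℝ) (by omega)
  have hlogm := Real.log_nonneg (one_le_mul_two_rpow_sub_one hm)
  refine ⟨(c ^ m)⁻¹ * (Real.log (m * 2 ^ (m - 1)) + 2 * π + 5 * ((d + 1) * 3 ^ (d + 1)) + 3),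
    by positivity, fun ζ hζ f g R R' hR hR' => ?_⟩
  have hlog := Real.log_nonneg (one_le_mul_of_one_le_of_one_le hR hR')
  rw [energy, energy, ← integral_add (integrable_energy f R) (integrable_energy g R'),
    ← integral_const_mul]
  refine norm_integral_le_of_ae_norm_integral_ray_le
    ((integrable_mul_conj_schwartz f g).mul_of_top_right
      (memLp_top_resolventSymbol ha hc hca hm hζ))
    (((integrable_energy f R).add (integrable_energy g R')).const_mul _) ?_
  filter_upwards [ae_rayEnergy_le (zero_le_one.trans hR) f,
    ae_rayEnergy_le (zero_le_one.trans hR') g, ae_integrableOn_polar (integrable_energy f R),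
    ae_integrableOn_polar (integrable_energy g R')] with ω hf hg hif hig
  rw [hd] at hf hg hif hig ⊢
  refine (norm_integral_resolventSymbol_ray_le hhom hc hca hm hζ hR hR' f g ω d).trans ?_
  rw [← mul_assoc, ← mul_assoc]
  refine (mul_le_mul_of_nonneg_left (add_le_add hf hg) (by positivity)).trans_eq ?_
  rw [← integral_add hif hig, ← integral_const_mul]
  refine integral_congr_ae (.of_forall fun r => ?_)
  simp only [smul_eq_mul]
  ring

end Energy

section L2Norm

variable {X : Type*} [MeasureSpace X] {f g : X → ℂ}

/-- The `L²` norm of a function, with the junk value `0` when it is infinite. -/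
def l2Norm (f : X → ℂ) : ℝ := (eLpNorm f 2 volume).toReal

theorem l2Norm_nonneg (f : X → ℂ) : 0 ≤ l2Norm f := ENNReal.toReal_nonneg

theorem l2Norm_eq_sqrt (hf : AEStronglyMeasurable f) : l2Norm f = √(∫ x, ‖f x‖ ^ 2) := by
  rw [l2Norm, toReal_eLpNorm hf, lpNorm_eq_integral_norm_rpow_toReal (by norm_num) (by norm_num) hf,
    sqrt_eq_rpow]
  simp

theorem l2Norm_sq (hf : AEStronglyMeasurable f) : l2Norm f ^ 2 = ∫ x, ‖f x‖ ^ 2 := by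
  rw [l2Norm_eq_sqrt hf, sq_sqrt (integral_nonneg fun _ => sq_nonneg _)]

theorem l2Norm_smul (c : ℂ) (f : X → ℂ) : l2Norm (c • f) = ‖c‖ * l2Norm f := by
  rw [l2Norm, l2Norm, eLpNorm_const_smul, ENNReal.toReal_mul, toReal_enorm]

theorem l2Norm_le_of_norm_le {L : ℝ} (hL : 0 ≤ L) (hg : MemLp g 2)
    (h : ∀ x, ‖f x‖ ≤ L * ‖g x‖) : l2Norm f ≤ L * l2Norm g := by
  rw [l2Norm, l2Norm, ← ENNReal.toReal_ofReal_mul _ _ hL]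
  exact ENNReal.toReal_mono (ENNReal.mul_ne_top ENNReal.ofReal_ne_top hg.eLpNorm_ne_top)
    (eLpNorm_le_mul_eLpNorm_of_ae_le_mul (.of_forall h) 2)

theorem integral_norm_mul_norm_le (hf : MemLp f 2) (hg : MemLp g 2) :
    ∫ x, ‖f x‖ * ‖g x‖ ≤ l2Norm f * l2Norm g := by
  rw [l2Norm_eq_sqrt hf.1, l2Norm_eq_sqrt hg.1]
  simpa [sqrt_eq_rpow] using integral_mul_norm_le_Lp_mul_Lq (f := f) (g := g)
    Real.HolderConjugate.two_two (by simpa using hf) (by simpa using hg)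

end L2Norm

section FourierEnergy

variable {E : Type*} [NormedAddCommGroup E] [InnerProductSpace ℝ E]

theorem norm_sq_le_sum_norm_sq_orthonormalBasis {ι : Type*} [Fintype ι]
    (b : OrthonormalBasis ι ℝ E) (T : E →L[ℝ] ℂ) : ‖T‖ ^ 2 ≤ ∑ i, ‖T (b i)‖ ^ 2 := by
  have hsum : 0 ≤ ∑ i, ‖T (b i)‖ ^ 2 := Finset.sum_nonneg fun i _ => sq_nonneg _
  refine (Real.le_sqrt (norm_nonneg T) hsum).1
    (T.opNorm_le_bound (Real.sqrt_nonneg _) fun v => ?_)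
  calc ‖T v‖ = ‖∑ i, ⟪b i, v⟫ • T (b i)‖ := by
        conv_lhs => rw [← b.sum_repr' v]
        simp only [map_sum, map_smul]
    _ ≤ ∑ i, ‖⟪b i, v⟫‖ * ‖T (b i)‖ := by
        simpa only [norm_smul] using norm_sum_le Finset.univ fun i => ⟪b i, v⟫ • T (b i)
    _ ≤ √(∑ i, ‖⟪b i, v⟫‖ ^ 2) * √(∑ i, ‖T (b i)‖ ^ 2) := Real.sum_mul_le_sqrt_mul_sqrt _ _ _
    _ = √(∑ i, ‖T (b i)‖ ^ 2) * ‖v‖ := by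
        rw [b.sum_sq_norm_inner_right, Real.sqrt_sq (norm_nonneg _), mul_comm]

variable [FiniteDimensional ℝ E] [MeasurableSpace E] [BorelSpace E] {R : ℝ}

theorem l2Norm_fourier (f : 𝓢(E, ℂ)) : l2Norm (𝓕 f : 𝓢(E, ℂ)) = l2Norm f := by
  rw [l2Norm_eq_sqrt (𝓕 f : 𝓢(E, ℂ)).continuous.aestronglyMeasurable,
    l2Norm_eq_sqrt f.continuous.aestronglyMeasurable, SchwartzMap.integral_norm_sq_fourier]

theorem integral_norm_fderiv_fourier_apply_sq (f : 𝓢(E, ℂ)) (v : E) :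
    ∫ ξ, ‖fderiv ℝ (𝓕 f : 𝓢(E, ℂ)) ξ v‖ ^ 2 = (2 * π) ^ 2 * ∫ x, ‖⟪v, x⟫‖ ^ 2 * ‖f x‖ ^ 2 := by
  have hv : (fun x : E => ⟪x, v⟫).HasTemperateGrowth := by fun_prop
  simp_rw [← SchwartzMap.lineDerivOp_apply_eq_fderiv, SchwartzMap.lineDerivOp_fourier_eq]
  rw [SchwartzMap.integral_norm_sq_fourier, ← integral_const_mul]
  refine integral_congr_ae (.of_forall fun x => ?_)
  simp only [smul_apply, SchwartzMap.smulLeftCLM_apply_apply hv, norm_smul, real_inner_comm x]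
  simp [abs_of_pos pi_pos, mul_pow]

theorem integrable_norm_fderiv_apply_sq_schwartz (f : 𝓢(E, ℂ)) (v : E) :
    Integrable fun x => ‖fderiv ℝ f x v‖ ^ 2 := by
  simpa only [SchwartzMap.lineDerivOp_apply_eq_fderiv] using integrable_norm_sq_schwartz (∂_{v} f)

theorem integrable_norm_inner_sq_mul_norm_sq_schwartz (f : 𝓢(E, ℂ)) (v : E) :
    Integrable fun x => ‖⟪v, x⟫‖ ^ 2 * ‖f x‖ ^ 2 := by
  have hv : (fun x : E => ⟪v, x⟫).HasTemperateGrowth := by fun_prop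
  simpa only [SchwartzMap.smulLeftCLM_apply_apply hv, norm_smul, mul_pow] using
    integrable_norm_sq_schwartz (SchwartzMap.smulLeftCLM ℂ (fun x : E => ⟪v, x⟫) f)

theorem integral_norm_fderiv_fourier_sq_le (f : 𝓢(E, ℂ))
    (hf : Function.support f ⊆ Metric.closedBall 0 R) :
    ∫ ξ, ‖fderiv ℝ (𝓕 f : 𝓢(E, ℂ)) ξ‖ ^ 2 ≤ (2 * π) ^ 2 * (R ^ 2 * ∫ x, ‖f x‖ ^ 2) := by
  set b := stdOrthonormalBasis ℝ E
  have hpt (x : E) : ∑ i, ‖⟪b i, x⟫‖ ^ 2 * ‖f x‖ ^ 2 ≤ R ^ 2 * ‖f x‖ ^ 2 := by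
    rw [← Finset.sum_mul, b.sum_sq_norm_inner_right]
    rcases eq_or_ne (f x) 0 with hx | hx
    · simp [hx]
    · gcongr
      exact mem_closedBall_zero_iff.1 (hf hx)
  calc ∫ ξ, ‖fderiv ℝ (𝓕 f : 𝓢(E, ℂ)) ξ‖ ^ 2
      ≤ ∫ ξ, ∑ i, ‖fderiv ℝ (𝓕 f : 𝓢(E, ℂ)) ξ (b i)‖ ^ 2 :=
        integral_mono (integrable_norm_fderiv_sq_schwartz _)
          (integrable_finsetSum _ fun i _ => integrable_norm_fderiv_apply_sq_schwartz _ _)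
          fun ξ => norm_sq_le_sum_norm_sq_orthonormalBasis b _
    _ = (2 * π) ^ 2 * ∫ x, ∑ i, ‖⟪b i, x⟫‖ ^ 2 * ‖f x‖ ^ 2 := by
        rw [integral_finsetSum _ fun i _ => integrable_norm_fderiv_apply_sq_schwartz _ _,
          integral_finsetSum _ fun i _ => integrable_norm_inner_sq_mul_norm_sq_schwartz _ _,
          Finset.mul_sum]
        exact Finset.sum_congr rfl fun i _ => integral_norm_fderiv_fourier_apply_sq f (b i)
    _ ≤ (2 * π) ^ 2 * (R ^ 2 * ∫ x, ‖f x‖ ^ 2) := by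
        gcongr
        rw [← integral_const_mul]
        exact integral_mono
          (integrable_finsetSum _ fun i _ => integrable_norm_inner_sq_mul_norm_sq_schwartz _ _)
          ((integrable_norm_sq_schwartz f).const_mul _) hpt

theorem energy_fourier_le (hR : 0 < R) (f : 𝓢(E, ℂ))
    (hf : Function.support f ⊆ Metric.closedBall 0 R) :
    energy R (𝓕 f : 𝓢(E, ℂ)) ≤ (1 + (2 * π) ^ 2) * (R * l2Norm f ^ 2) := by
  rw [energy, integral_add ((integrable_norm_sq_schwartz _).const_mul R)
    ((integrable_norm_fderiv_sq_schwartz _).const_mul R⁻¹), integral_const_mul,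
    integral_const_mul, SchwartzMap.integral_norm_sq_fourier,
    l2Norm_sq f.continuous.aestronglyMeasurable]
  calc _ ≤ R * (∫ x, ‖f x‖ ^ 2) + R⁻¹ * ((2 * π) ^ 2 * (R ^ 2 * ∫ x, ‖f x‖ ^ 2)) := by
        gcongr
        exact integral_norm_fderiv_fourier_sq_le f hf
    _ = _ := by field_simp

end FourierEnergy

section MultiplierForm

variable {E : Type*} [NormedAddCommGroup E] [InnerProductSpace ℝ E] [FiniteDimensional ℝ E]
  [MeasurableSpace E] [BorelSpace E] {q : E → ℂ}

/-- The sesquilinear form `(f, g) ↦ (q 𝓕f, 𝓕g)` of a bounded Fourier multiplier, with Mathlib's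
normalization of the Fourier transform. -/
def multiplierForm (hq : MemLp q ⊤ volume) : 𝓢(E, ℂ) →ₗ[ℂ] 𝓢(E, ℂ) →ₗ⋆[ℂ] ℂ :=
  have hint (f g : 𝓢(E, ℂ)) :
      Integrable fun ξ => q ξ * ((𝓕 f : 𝓢(E, ℂ)) ξ * conj ((𝓕 g : 𝓢(E, ℂ)) ξ)) :=
    (integrable_mul_conj_schwartz _ _).mul_of_top_right hq
  LinearMap.mk₂'ₛₗ (RingHom.id ℂ) (starRingEnd ℂ)
    (fun f g => ∫ ξ, q ξ * ((𝓕 f : 𝓢(E, ℂ)) ξ * conj ((𝓕 g : 𝓢(E, ℂ)) ξ)))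
    (fun f₁ f₂ g => by
      simp only [FourierTransform.fourier_add, add_apply, add_mul, mul_add]
      exact integral_add (hint f₁ g) (hint f₂ g))
    (fun c f g => by
      simp only [FourierTransform.fourier_smul, smul_apply, smul_eq_mul, RingHom.id_apply,
        mul_assoc, mul_left_comm _ c]
      exact integral_const_mul _ _)
    (fun f g₁ g₂ => by
      simp only [FourierTransform.fourier_add, add_apply, map_add, mul_add]
      exact integral_add (hint f g₁) (hint f g₂))
    (fun c f g => by
      simp only [FourierTransform.fourier_smul, smul_apply, smul_eq_mul, map_mul,
        mul_left_comm _ (conj c)]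
      exact integral_const_mul _ _)

theorem multiplierForm_apply (hq : MemLp q ⊤ volume) (f g : 𝓢(E, ℂ)) :
    multiplierForm hq f g =
      ∫ ξ, q ξ * ((𝓕 f : 𝓢(E, ℂ)) ξ * conj ((𝓕 g : 𝓢(E, ℂ)) ξ)) := rfl

theorem norm_multiplierForm_le (hq : MemLp q ⊤ volume) (f g : 𝓢(E, ℂ)) :
    ‖multiplierForm hq f g‖ ≤ (eLpNorm q ⊤ volume).toReal * (l2Norm f * l2Norm g) := by
  have hbound : ∀ᵐ ξ, ‖q ξ‖ ≤ (eLpNorm q ⊤ volume).toReal := by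
    filter_upwards [enorm_ae_le_eLpNormEssSup q volume] with ξ hξ
    rw [← toReal_enorm]
    exact ENNReal.toReal_mono hq.eLpNorm_ne_top (hξ.trans_eq eLpNorm_exponent_top.symm)
  have hint : Integrable fun ξ => ‖(𝓕 f : 𝓢(E, ℂ)) ξ‖ * ‖(𝓕 g : 𝓢(E, ℂ)) ξ‖ :=
    integrable_norm_mul_norm_schwartz _ _
  calc ‖multiplierForm hq f g‖
      ≤ ∫ ξ, (eLpNorm q ⊤ volume).toReal * (‖(𝓕 f : 𝓢(E, ℂ)) ξ‖ * ‖(𝓕 g : 𝓢(E, ℂ)) ξ‖) := by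
        refine norm_integral_le_of_norm_le (hint.const_mul _) ?_
        filter_upwards [hbound] with ξ hξ
        rw [norm_mul, norm_mul, RCLike.norm_conj]
        gcongr
    _ ≤ (eLpNorm q ⊤ volume).toReal * (l2Norm f * l2Norm g) := by
        rw [integral_const_mul, ← l2Norm_fourier f, ← l2Norm_fourier g]
        gcongr
        exact integral_norm_mul_norm_le ((𝓕 f : 𝓢(E, ℂ)).memLp 2 volume)
          ((𝓕 g : 𝓢(E, ℂ)).memLp 2 volume)

end MultiplierForm

section LocalizedBound

open Filter Topology

theorem le_two_mul_of_forall_le_sq_add_sq {x A B : ℝ} (hA : 0 ≤ A) (hB : 0 ≤ B)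
    (h : ∀ t > 0, x ≤ (t * A) ^ 2 + (t⁻¹ * B) ^ 2) : x ≤ 2 * (A * B) := by
  have hε : ∀ ε > 0, x ≤ 2 * ((A + ε) * (B + ε)) := fun ε hε => by
    have hratio : 0 < (B + ε) / (A + ε) := by positivity
    calc x ≤ (√((B + ε) / (A + ε)) * A) ^ 2 + ((√((B + ε) / (A + ε)))⁻¹ * B) ^ 2 :=
          h _ (Real.sqrt_pos.2 hratio)
      _ ≤ (√((B + ε) / (A + ε)) * (A + ε)) ^ 2 + ((√((B + ε) / (A + ε)))⁻¹ * (B + ε)) ^ 2 := by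
          gcongr <;> linarith
      _ = 2 * ((A + ε) * (B + ε)) := by
          rw [mul_pow, mul_pow, inv_pow, Real.sq_sqrt hratio.le]
          field_simp
          ring
  have hlim : Tendsto (fun ε => 2 * ((A + ε) * (B + ε))) (𝓝[>] 0) (𝓝 (2 * (A * B))) := by
    have hcont : Continuous fun ε => 2 * ((A + ε) * (B + ε)) := by fun_prop
    simpa only [add_zero] using (hcont.tendsto 0).mono_left nhdsWithin_le_nhds
  exact ge_of_tendsto hlim (eventually_mem_nhdsWithin.mono hε)

theorem norm_sesquilinear_le_two_mul {V W : Type*} [AddCommGroup V] [Module ℂ V] [AddCommGroup W]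
    [Module ℂ W] (T : V →ₗ[ℂ] W →ₗ⋆[ℂ] ℂ) {v : V} {w : W} {K A B : ℝ} (hK : 0 < K) (hA : 0 ≤ A)
    (hB : 0 ≤ B) (h : ∀ t : ℝ, 0 < t →
      ‖T ((t : ℂ) • v) ((t : ℂ)⁻¹ • w)‖ ≤ K * ((t * A) ^ 2 + (t⁻¹ * B) ^ 2)) :
    ‖T v w‖ ≤ K * (2 * (A * B)) := by
  refine (div_le_iff₀' hK).1 (le_two_mul_of_forall_le_sq_add_sq hA hB fun t ht => ?_)
  have ht' : (t : ℂ) ≠ 0 := ofReal_ne_zero.2 ht.ne'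
  have hT : T ((t : ℂ) • v) ((t : ℂ)⁻¹ • w) = T v w := by
    simp [ht']
  exact (div_le_iff₀' hK).2 (hT ▸ h t ht)

theorem one_add_log_le_rpow {x κ : ℝ} (hx : 1 ≤ x) (hκ : 0 < κ) :
    1 + Real.log x ≤ (1 + κ⁻¹) * x ^ κ := by
  have hlog := Real.log_le_rpow_div (zero_le_one.trans hx) hκ
  have hone := Real.one_le_rpow hx hκ.le
  rw [add_mul, one_mul, inv_mul_eq_div]
  linarith

theorem one_add_log_mul_sqrt_mul_sqrt_le {R R' σ : ℝ} (hR : 1 ≤ R) (hR' : 1 ≤ R')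
    (hσ : 1 / 2 < σ) :
    (1 + Real.log (R * R')) * (√R * √R') ≤ (1 + (σ - 1 / 2)⁻¹) * (R ^ σ * R' ^ σ) := by
  have hR0 : 0 < R := by linarith
  have hR0' : 0 < R' := by linarith
  calc (1 + Real.log (R * R')) * (√R * √R')
      ≤ (1 + (σ - 1 / 2)⁻¹) * (R * R') ^ (σ - 1 / 2) * (√R * √R') := by
        gcongr
        exact one_add_log_le_rpow (one_le_mul_of_one_le_of_one_le hR hR') (sub_pos.2 hσ)
    _ = (1 + (σ - 1 / 2)⁻¹) * (R ^ σ * R' ^ σ) := by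
        rw [← Real.sqrt_mul hR0.le, sqrt_eq_rpow, mul_assoc, ← rpow_add (by positivity),
          sub_add_cancel, mul_rpow hR0.le hR0'.le]

variable {E : Type*} [NormedAddCommGroup E] [InnerProductSpace ℝ E] [FiniteDimensional ℝ E]
  [MeasurableSpace E] [BorelSpace E] {a : E → ℝ} {c m σ : ℝ}

theorem exists_norm_multiplierForm_resolventSymbol_le_of_support (hE : 2 ≤ Module.finrank ℝ E)
    (ha : Measurable a) (hhom : ∀ t : ℝ, 0 < t → ∀ ξ, a (t • ξ) = t * a ξ) (hc : 0 < c)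
    (hca : ∀ ξ, c * ‖ξ‖ ≤ a ξ) (hm : 1 ≤ m) (hσ : 1 / 2 < σ) :
    ∃ C > 0, ∀ (ζ : ℂ) (hζ : ζ.im ≠ 0) (f g : 𝓢(E, ℂ)) (R R' : ℝ), 1 ≤ R → 1 ≤ R' →
      Function.support f ⊆ Metric.closedBall 0 R → Function.support g ⊆ Metric.closedBall 0 R' →
      ‖multiplierForm (memLp_top_resolventSymbol ha hc hca hm hζ) f g‖ ≤
        C * ((R ^ σ * l2Norm f) * (R' ^ σ * l2Norm g)) := by
  obtain ⟨C, hC, hform⟩ := exists_norm_integral_resolventSymbol_le_energy hE ha hhom hc hca hm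
  have hσ' : 0 < (σ - 1 / 2)⁻¹ := inv_pos.2 (sub_pos.2 hσ)
  refine ⟨2 * (C * (1 + (2 * π) ^ 2)) * (1 + (σ - 1 / 2)⁻¹), by positivity,
    fun ζ hζ f g R R' hR hR' hf hg => ?_⟩
  have hR0 : 0 < R := by linarith
  have hR0' : 0 < R' := by linarith
  have hlog := Real.log_nonneg (one_le_mul_of_one_le_of_one_le hR hR')
  have hf0 := l2Norm_nonneg f
  have hg0 := l2Norm_nonneg g
  have hscaled (t : ℝ) (ht : 0 < t) :
      ‖multiplierForm (memLp_top_resolventSymbol ha hc hca hm hζ) ((t : ℂ) • f) ((t : ℂ)⁻¹ • g)‖ ≤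
        C * (1 + (2 * π) ^ 2) * (1 + Real.log (R * R')) *
          ((t * (√R * l2Norm f)) ^ 2 + (t⁻¹ * (√R' * l2Norm g)) ^ 2) := by
    have hft := energy_fourier_le hR0 ((t : ℂ) • f)
      ((Function.support_const_smul_subset _ _).trans hf)
    have hgt := energy_fourier_le hR0' ((t : ℂ)⁻¹ • g)
      ((Function.support_const_smul_subset _ _).trans hg)
    simp only [FunLike.coe_smul, l2Norm_smul, norm_inv, norm_real, Real.norm_of_nonneg ht.le]
      at hft hgt
    refine (hform ζ hζ _ _ R R' hR hR').trans ((mul_le_mul_of_nonneg_left (add_le_add hft hgt)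
      (by positivity)).trans_eq ?_)
    simp only [mul_pow, Real.sq_sqrt hR0.le, Real.sq_sqrt hR0'.le]
    ring
  calc _ ≤ C * (1 + (2 * π) ^ 2) * (1 + Real.log (R * R')) *
        (2 * ((√R * l2Norm f) * (√R' * l2Norm g))) :=
        norm_sesquilinear_le_two_mul _ (by positivity) (by positivity) (by positivity) hscaled
    _ = 2 * (C * (1 + (2 * π) ^ 2)) * (l2Norm f * l2Norm g) *
        ((1 + Real.log (R * R')) * (√R * √R')) := by ring
    _ ≤ 2 * (C * (1 + (2 * π) ^ 2)) * (l2Norm f * l2Norm g) *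
        ((1 + (σ - 1 / 2)⁻¹) * (R ^ σ * R' ^ σ)) := by
        refine mul_le_mul_of_nonneg_left ?_ (by positivity)
        exact one_add_log_mul_sqrt_mul_sqrt_le hR hR' hσ
    _ = _ := by ring

end LocalizedBound

section DyadicDecomposition

open Filter Topology

variable {E : Type*} [NormedAddCommGroup E] {δ : ℝ}

/-- The product `⟨x⟩ ^ δ f(x)` of a function with a power of the Japanese bracket. -/
def weighted (δ : ℝ) (f : E → ℂ) (x : E) : ℂ := ((√(1 + ‖x‖ ^ 2) ^ δ : ℝ) : ℂ) * f x

theorem norm_le_rpow_neg_mul_norm_weighted {r : ℝ} (hδ : 0 ≤ δ) (hr : 0 < r) (f : E → ℂ) {x : E}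
    (hx : r ≤ √(1 + ‖x‖ ^ 2)) : ‖f x‖ ≤ r ^ (-δ) * ‖weighted δ f x‖ := by
  rw [weighted, norm_mul, norm_real, Real.norm_of_nonneg (by positivity), rpow_neg hr.le,
    le_inv_mul_iff₀ (by positivity)]
  gcongr

theorem norm_smul_le_of_le_of_ne_zero {r s : ℝ} (hδ : 0 ≤ δ) (hr : 0 < r) (hs : |s| ≤ 1)
    (f : E → ℂ) {x : E} (hx : s ≠ 0 → r ≤ √(1 + ‖x‖ ^ 2)) :
    ‖s • f x‖ ≤ r ^ (-δ) * ‖weighted δ f x‖ := by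
  rcases eq_or_ne s 0 with rfl | hs0
  · rw [zero_smul, norm_zero]
    positivity
  · rw [norm_smul]
    exact (mul_le_of_le_one_left (norm_nonneg _) hs).trans
      (norm_le_rpow_neg_mul_norm_weighted hδ hr f (hx hs0))

variable [InnerProductSpace ℝ E]

theorem hasTemperateGrowth_sqrt_one_add_norm_sq_rpow (δ : ℝ) :
    (fun x : E => √(1 + ‖x‖ ^ 2) ^ δ).HasTemperateGrowth := by
  have hpow : (fun x : E => √(1 + ‖x‖ ^ 2) ^ δ) = fun x : E => (1 + ‖x‖ ^ 2) ^ (1 / 2 * δ) := by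
    ext x
    rw [sqrt_eq_rpow, ← rpow_mul (by positivity)]
  rw [hpow]
  exact Function.hasTemperateGrowth_one_add_norm_sq_rpow E _

/-- A smooth cutoff supported in the ball of radius `2 ^ j`, equal to one on the ball of half the
radius when `0 < j`, and identically zero when `j = 0`, so that differences of consecutive cutoffs
add up to the last one. -/
def dyadicCutoff (E : Type*) [NormedAddCommGroup E] [InnerProductSpace ℝ E] : ℕ → E → ℝ
  | 0 => 0
  | j + 1 => (⟨2 ^ j, 2 ^ (j + 1), by positivity, pow_lt_pow_right₀ one_lt_two j.lt_succ_self⟩ :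
      ContDiffBump (0 : E))

theorem dyadicCutoff_mem_Icc (j : ℕ) (x : E) : dyadicCutoff E j x ∈ Set.Icc (0 : ℝ) 1 := by
  cases j with
  | zero => exact ⟨le_rfl, zero_le_one⟩
  | succ j => exact ⟨ContDiffBump.nonneg _, ContDiffBump.le_one _⟩

theorem dyadicCutoff_eq_zero {j : ℕ} {x : E} (hx : 2 ^ j ≤ ‖x‖) : dyadicCutoff E j x = 0 := by
  cases j with
  | zero => rfl
  | succ j => exact ContDiffBump.zero_of_le_dist _ (by rwa [dist_zero_right])

theorem two_pow_div_two_le_of_dyadicCutoff_ne_one {j : ℕ} {x : E} (hx : dyadicCutoff E j x ≠ 1) :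
    2 ^ j / 2 ≤ √(1 + ‖x‖ ^ 2) := by
  cases j with
  | zero => exact Real.le_sqrt_of_sq_le (by nlinarith [sq_nonneg ‖x‖])
  | succ j =>
    have hlt : 2 ^ j < ‖x‖ := by
      contrapose! hx
      exact ContDiffBump.one_of_mem_closedBall _ (mem_closedBall_zero_iff.2 hx)
    rw [pow_succ, mul_div_cancel_right₀ _ two_ne_zero]
    exact Real.le_sqrt_of_sq_le (by nlinarith [pow_pos (two_pos (α := ℝ)) j])

variable [FiniteDimensional ℝ E]

theorem hasTemperateGrowth_dyadicCutoff (j : ℕ) : (dyadicCutoff E j).HasTemperateGrowth := by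
  cases j with
  | zero => exact Function.HasTemperateGrowth.zero
  | succ j => exact (ContDiffBump.hasCompactSupport _).hasTemperateGrowth (ContDiffBump.contDiff _)

/-- The product of a Schwartz function with `dyadicCutoff E j`. -/
def truncation (j : ℕ) : 𝓢(E, ℂ) →L[ℝ] 𝓢(E, ℂ) := SchwartzMap.smulLeftCLM ℂ (dyadicCutoff E j)

theorem truncation_apply (j : ℕ) (f : 𝓢(E, ℂ)) (x : E) :
    truncation j f x = dyadicCutoff E j x • f x :=
  SchwartzMap.smulLeftCLM_apply_apply (hasTemperateGrowth_dyadicCutoff j) f x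

/-- The part of a Schwartz function living at distance about `2 ^ j` from the origin. -/
def dyadicPiece (j : ℕ) (f : 𝓢(E, ℂ)) : 𝓢(E, ℂ) := truncation (j + 1) f - truncation j f

theorem dyadicPiece_apply (j : ℕ) (f : 𝓢(E, ℂ)) (x : E) :
    dyadicPiece j f x = (dyadicCutoff E (j + 1) x - dyadicCutoff E j x) • f x := by
  rw [dyadicPiece, sub_apply, truncation_apply, truncation_apply, sub_smul]

theorem sum_dyadicPiece (f : 𝓢(E, ℂ)) (J : ℕ) :
    ∑ j ∈ Finset.range J, dyadicPiece j f = truncation J f := by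
  have hzero : truncation 0 f = 0 := by
    ext x
    rw [truncation_apply]
    exact zero_smul ℝ _
  rw [← sub_zero (truncation J f), ← hzero]
  exact Finset.sum_range_sub (fun j => truncation j f) J

theorem support_dyadicPiece_subset (j : ℕ) (f : 𝓢(E, ℂ)) :
    Function.support (dyadicPiece j f) ⊆ Metric.closedBall 0 (2 ^ (j + 1)) := by
  intro x hx
  contrapose! hx
  have hle : 2 ^ (j + 1) ≤ ‖x‖ := (not_le.1 (mt mem_closedBall_zero_iff.2 hx)).le
  rw [Function.notMem_support, dyadicPiece_apply, dyadicCutoff_eq_zero hle, dyadicCutoff_eq_zero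
    ((pow_le_pow_right₀ one_le_two j.le_succ).trans hle), sub_zero, zero_smul]

variable [MeasurableSpace E] [BorelSpace E]

theorem memLp_weighted (δ : ℝ) (f : 𝓢(E, ℂ)) : MemLp (weighted δ f) 2 := by
  have hw : weighted δ f = SchwartzMap.smulLeftCLM ℂ (fun x : E => √(1 + ‖x‖ ^ 2) ^ δ) f := by
    ext x
    rw [SchwartzMap.smulLeftCLM_apply_apply (hasTemperateGrowth_sqrt_one_add_norm_sq_rpow δ),
      real_smul, weighted]
  rw [hw]
  exact SchwartzMap.memLp _ 2 volume

theorem l2Norm_truncation_le (j : ℕ) (f : 𝓢(E, ℂ)) : l2Norm (truncation j f) ≤ l2Norm f := by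
  rw [← one_mul (l2Norm f)]
  refine l2Norm_le_of_norm_le zero_le_one (f.memLp 2 volume) fun x => ?_
  obtain ⟨h0, h1⟩ := dyadicCutoff_mem_Icc j x
  rw [truncation_apply, norm_smul, Real.norm_of_nonneg h0]
  gcongr

theorem l2Norm_sub_truncation_le (hδ : 0 ≤ δ) (j : ℕ) (f : 𝓢(E, ℂ)) :
    l2Norm ⇑(f - truncation j f) ≤ (2 ^ j / 2) ^ (-δ) * l2Norm (weighted δ f) := by
  refine l2Norm_le_of_norm_le (by positivity) (memLp_weighted δ f) fun x => ?_
  obtain ⟨h0, h1⟩ := dyadicCutoff_mem_Icc j x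
  have hsub : (f - truncation j f) x = (1 - dyadicCutoff E j x) • f x := by
    rw [sub_apply, truncation_apply, sub_smul, one_smul]
  rw [hsub]
  refine norm_smul_le_of_le_of_ne_zero hδ (by positivity)
    (abs_le.2 ⟨by linarith, by linarith⟩) f fun hne => ?_
  exact two_pow_div_two_le_of_dyadicCutoff_ne_one (sub_ne_zero.1 hne).symm

theorem l2Norm_dyadicPiece_le (hδ : 0 ≤ δ) (j : ℕ) (f : 𝓢(E, ℂ)) :
    l2Norm (dyadicPiece j f) ≤ (2 ^ j / 2) ^ (-δ) * l2Norm (weighted δ f) := by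
  refine l2Norm_le_of_norm_le (by positivity) (memLp_weighted δ f) fun x => ?_
  obtain ⟨h0, h1⟩ := dyadicCutoff_mem_Icc j x
  obtain ⟨h0', h1'⟩ := dyadicCutoff_mem_Icc (j + 1) x
  rw [dyadicPiece_apply]
  refine norm_smul_le_of_le_of_ne_zero hδ (by positivity)
    (abs_le.2 ⟨by linarith, by linarith⟩) f fun hne => ?_
  by_cases hj : dyadicCutoff E j x = 1
  · have hj' : dyadicCutoff E (j + 1) x ≠ 1 := hj ▸ sub_ne_zero.1 hne
    refine le_trans ?_ (two_pow_div_two_le_of_dyadicCutoff_ne_one hj')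
    gcongr
    · exact one_le_two
    · exact j.le_succ
  · exact two_pow_div_two_le_of_dyadicCutoff_ne_one hj

end DyadicDecomposition

section DyadicSummation

open Filter Topology

theorem norm_sesquilinear_sum_sum_le {V W ι κ : Type*} [AddCommGroup V] [Module ℂ V]
    [AddCommGroup W] [Module ℂ W] (T : V →ₗ[ℂ] W →ₗ⋆[ℂ] ℂ) {s : Finset ι} {t : Finset κ}
    {v : ι → V} {w : κ → W} {p : ι → ℝ} {q : κ → ℝ} (h : ∀ i k, ‖T (v i) (w k)‖ ≤ p i * q k) :
    ‖T (∑ i ∈ s, v i) (∑ k ∈ t, w k)‖ ≤ (∑ i ∈ s, p i) * ∑ k ∈ t, q k := by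
  rw [map_sum T, LinearMap.sum_apply, Finset.sum_mul_sum]
  refine norm_sum_le_of_le s fun i _ => ?_
  rw [map_sum]
  exact norm_sum_le_of_le t fun k _ => h i k

theorem two_pow_succ_rpow_mul_two_pow_div_two_rpow_neg (σ δ : ℝ) (j : ℕ) :
    ((2 : ℝ) ^ (j + 1)) ^ σ * (2 ^ j / 2) ^ (-δ) = 2 ^ (σ + δ) * (2 ^ (σ - δ)) ^ j := by
  have hdiv : (2 : ℝ) ^ j / 2 = 2 ^ ((j : ℝ) - 1) := by
    rw [rpow_sub_one two_ne_zero, rpow_natCast]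
  rw [hdiv, ← rpow_natCast, ← rpow_natCast, ← rpow_mul two_pos.le, ← rpow_mul two_pos.le,
    ← rpow_mul two_pos.le, ← rpow_add two_pos, ← rpow_add two_pos]
  push_cast
  ring_nf

theorem tendsto_two_pow_div_two_rpow_neg {δ : ℝ} (hδ : 0 < δ) :
    Tendsto (fun j : ℕ => ((2 : ℝ) ^ j / 2) ^ (-δ)) atTop (𝓝 0) :=
  (tendsto_rpow_neg_atTop hδ).comp
    ((tendsto_pow_atTop_atTop_of_one_lt one_lt_two).atTop_div_const two_pos)

theorem geom_sum_le_inv_one_sub {ρ : ℝ} (hρ : 0 ≤ ρ) (hρ1 : ρ < 1) (J : ℕ) :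
    ∑ j ∈ Finset.range J, ρ ^ j ≤ (1 - ρ)⁻¹ := by
  rw [← tsum_geometric_of_lt_one hρ hρ1]
  exact (summable_geometric_of_lt_one hρ hρ1).sum_le_tsum _ fun j _ => pow_nonneg hρ j

variable {E : Type*} [NormedAddCommGroup E] [InnerProductSpace ℝ E] [FiniteDimensional ℝ E]
  [MeasurableSpace E] [BorelSpace E] {K C σ δ : ℝ} {T : 𝓢(E, ℂ) →ₗ[ℂ] 𝓢(E, ℂ) →ₗ⋆[ℂ] ℂ}

theorem tendsto_l2Norm_sub_truncation (f : 𝓢(E, ℂ)) :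
    Tendsto (fun J => l2Norm ⇑(f - truncation J f)) atTop (𝓝 0) := by
  refine squeeze_zero (fun _ => l2Norm_nonneg _)
    (fun J => l2Norm_sub_truncation_le zero_le_one J f) ?_
  simpa only [zero_mul] using (tendsto_two_pow_div_two_rpow_neg one_pos).mul_const _

theorem tendsto_sesquilinear_truncation (hK : 0 ≤ K)
    (hT : ∀ f g, ‖T f g‖ ≤ K * (l2Norm f * l2Norm g)) (f g : 𝓢(E, ℂ)) :
    Tendsto (fun J => T (truncation J f) (truncation J g)) atTop (𝓝 (T f g)) := by
  have hlim : Tendsto (fun J => K * (l2Norm ⇑(f - truncation J f) * l2Norm g) +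
      K * (l2Norm f * l2Norm ⇑(g - truncation J g))) atTop (𝓝 0) := by
    simpa only [zero_mul, mul_zero, add_zero] using
      (((tendsto_l2Norm_sub_truncation f).mul_const (l2Norm g)).const_mul K).add
        (((tendsto_l2Norm_sub_truncation g).const_mul (l2Norm f)).const_mul K)
  refine tendsto_iff_norm_sub_tendsto_zero.2 (squeeze_zero (fun _ => norm_nonneg _) (fun J => ?_)
    hlim)
  have hsplit : T f g - T (truncation J f) (truncation J g) =
      T (f - truncation J f) g + T (truncation J f) (g - truncation J g) := by
    rw [map_sub, map_sub, LinearMap.sub_apply, sub_add_sub_cancel]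
  rw [norm_sub_rev, hsplit]
  refine (norm_add_le _ _).trans (add_le_add (hT _ _) ((hT _ _).trans ?_))
  gcongr
  · exact l2Norm_nonneg _
  · exact l2Norm_truncation_le J f

theorem norm_sesquilinear_truncation_le (hC : 0 ≤ C) (hδ : 0 ≤ δ) (hσ : σ < δ)
    (hloc : ∀ (f g : 𝓢(E, ℂ)) (R R' : ℝ), 1 ≤ R → 1 ≤ R' →
      Function.support f ⊆ Metric.closedBall 0 R → Function.support g ⊆ Metric.closedBall 0 R' →
      ‖T f g‖ ≤ C * ((R ^ σ * l2Norm f) * (R' ^ σ * l2Norm g))) (f g : 𝓢(E, ℂ)) (J : ℕ) :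
    ‖T (truncation J f) (truncation J g)‖ ≤ C * (2 ^ (σ + δ) * (1 - 2 ^ (σ - δ))⁻¹) ^ 2 *
      l2Norm (weighted δ f) * l2Norm (weighted δ g) := by
  have hf0 := l2Norm_nonneg (weighted δ f)
  have hg0 := l2Norm_nonneg (weighted δ g)
  have hone (j : ℕ) : (1 : ℝ) ≤ 2 ^ (j + 1) := one_le_pow₀ one_le_two
  have hpiece (h : 𝓢(E, ℂ)) (j : ℕ) : (2 ^ (j + 1)) ^ σ * l2Norm (dyadicPiece j h) ≤
      2 ^ (σ + δ) * l2Norm (weighted δ h) * (2 ^ (σ - δ)) ^ j := by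
    rw [mul_right_comm, ← two_pow_succ_rpow_mul_two_pow_div_two_rpow_neg, mul_assoc]
    gcongr
    exact l2Norm_dyadicPiece_le hδ j h
  have hpieces (j k : ℕ) : ‖T (dyadicPiece j f) (dyadicPiece k g)‖ ≤
      (C * (2 ^ (σ + δ) * l2Norm (weighted δ f) * (2 ^ (σ - δ)) ^ j)) *
        (2 ^ (σ + δ) * l2Norm (weighted δ g) * (2 ^ (σ - δ)) ^ k) := by
    refine (hloc _ _ _ _ (hone j) (hone k) (support_dyadicPiece_subset j f)
      (support_dyadicPiece_subset k g)).trans ?_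
    rw [mul_assoc C]
    refine mul_le_mul_of_nonneg_left (mul_le_mul (hpiece f j) (hpiece g k) ?_ ?_) hC
    · exact mul_nonneg (by positivity) (l2Norm_nonneg _)
    · positivity
  have hgeom := geom_sum_le_inv_one_sub (ρ := 2 ^ (σ - δ)) (by positivity)
    (rpow_lt_one_of_one_lt_of_neg one_lt_two (sub_neg.2 hσ)) J
  have hgeom0 := (Finset.sum_nonneg fun j _ => by positivity).trans hgeom
  rw [← sum_dyadicPiece, ← sum_dyadicPiece]
  refine (norm_sesquilinear_sum_sum_le T hpieces).trans ?_
  simp only [← Finset.mul_sum]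
  calc _ ≤ (C * (2 ^ (σ + δ) * l2Norm (weighted δ f) * (1 - 2 ^ (σ - δ))⁻¹)) *
        (2 ^ (σ + δ) * l2Norm (weighted δ g) * (1 - 2 ^ (σ - δ))⁻¹) := by gcongr
    _ = _ := by ring

theorem norm_sesquilinear_le_weighted (hK : 0 ≤ K) (hC : 0 ≤ C) (hδ : 0 ≤ δ) (hσ : σ < δ)
    (hT : ∀ f g, ‖T f g‖ ≤ K * (l2Norm f * l2Norm g))
    (hloc : ∀ (f g : 𝓢(E, ℂ)) (R R' : ℝ), 1 ≤ R → 1 ≤ R' →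
      Function.support f ⊆ Metric.closedBall 0 R → Function.support g ⊆ Metric.closedBall 0 R' →
      ‖T f g‖ ≤ C * ((R ^ σ * l2Norm f) * (R' ^ σ * l2Norm g))) (f g : 𝓢(E, ℂ)) :
    ‖T f g‖ ≤ C * (2 ^ (σ + δ) * (1 - 2 ^ (σ - δ))⁻¹) ^ 2 *
      l2Norm (weighted δ f) * l2Norm (weighted δ g) :=
  le_of_tendsto' (tendsto_sesquilinear_truncation hK hT f g).norm
    (norm_sesquilinear_truncation_le hC hδ hσ hloc f g)

end DyadicSummation

section WeightedBound

variable {E : Type*} [NormedAddCommGroup E] [InnerProductSpace ℝ E] [FiniteDimensional ℝ E]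
  [MeasurableSpace E] [BorelSpace E] {a : E → ℝ} {c m δ : ℝ}

theorem exists_norm_multiplierForm_resolventSymbol_le_weighted (hE : 2 ≤ Module.finrank ℝ E)
    (ha : Measurable a) (hhom : ∀ t : ℝ, 0 < t → ∀ ξ, a (t • ξ) = t * a ξ) (hc : 0 < c)
    (hca : ∀ ξ, c * ‖ξ‖ ≤ a ξ) (hm : 1 ≤ m) (hδ : 1 / 2 < δ) :
    ∃ C > 0, ∀ (ζ : ℂ) (hζ : ζ.im ≠ 0) (f g : 𝓢(E, ℂ)),
      ‖multiplierForm (memLp_top_resolventSymbol ha hc hca hm hζ) f g‖ ≤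
        C * l2Norm (weighted δ f) * l2Norm (weighted δ g) := by
  obtain ⟨σ, hσ, hσδ⟩ := exists_between hδ
  obtain ⟨C, hC, hloc⟩ :=
    exists_norm_multiplierForm_resolventSymbol_le_of_support hE ha hhom hc hca hm hσ
  have hρ : (2 : ℝ) ^ (σ - δ) < 1 := rpow_lt_one_of_one_lt_of_neg one_lt_two (sub_neg.2 hσδ)
  have hρ' : 0 < (1 - (2 : ℝ) ^ (σ - δ))⁻¹ := inv_pos.2 (sub_pos.2 hρ)
  refine ⟨C * (2 ^ (σ + δ) * (1 - 2 ^ (σ - δ))⁻¹) ^ 2, by positivity, fun ζ hζ => ?_⟩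
  exact norm_sesquilinear_le_weighted ENNReal.toReal_nonneg hC.le (by linarith) hσδ
    (norm_multiplierForm_le _) (hloc ζ hζ)

end WeightedBound

section Plancherel

theorem integral_fourierInv_mul_conj {V : Type*} [NormedAddCommGroup V]
    [InnerProductSpace ℝ V] [FiniteDimensional ℝ V] [MeasurableSpace V] [BorelSpace V]
    {F g : V → ℂ} (hF : Integrable F) (hg : Integrable g) :
    ∫ x, 𝓕⁻ F x * conj (g x) = ∫ ξ, F ξ * conj (𝓕 g ξ) := by
  have h := VectorFourier.integral_sesq_fourierIntegral_eq_neg_flip (μ := volume) (ν := volume)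
    (L := innerₗ V) (innerSL ℂ) Real.continuous_fourierChar continuous_inner hg hF
  rw [flip_innerₗ] at h
  exact h.symm

variable {n : ℕ}

theorem FT_eq_fourier (f : EuclideanSpace ℝ (Fin n) → ℂ) (ξ : EuclideanSpace ℝ (Fin n)) :
    FT n f ξ = ((2 * π) ^ (-(n : ℝ) / 2) : ℝ) • 𝓕 f ((2 * π)⁻¹ • ξ) := by
  rw [FT, Real.fourier_eq']
  congr 2 with x
  have hpi : (2 * π) * (2 * π)⁻¹ = 1 := mul_inv_cancel₀ (by positivity)
  rw [smul_eq_mul, real_inner_smul_right, neg_mul 2 π, neg_mul (2 * π), ← mul_assoc,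
    hpi, one_mul, Complex.ofReal_neg, neg_mul, neg_mul, mul_comm Complex.I]

theorem IFT_eq_fourierInv (F : EuclideanSpace ℝ (Fin n) → ℂ) (x : EuclideanSpace ℝ (Fin n)) :
    IFT n F x = ((2 * π) ^ (-(n : ℝ) / 2) * (2 * π) ^ n : ℝ) •
      𝓕⁻ (fun η => F ((2 * π) • η)) x := by
  have hscale := Measure.integral_comp_smul (volume : Measure (EuclideanSpace ℝ (Fin n)))
    (fun ξ => Complex.exp (Complex.I * ((⟪x, ξ⟫ : ℝ) : ℂ)) * F ξ) (2 * π)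
  have hpos : (0 : ℝ) < (2 * π) ^ n := by positivity
  rw [finrank_euclideanSpace_fin, abs_of_pos (inv_pos.2 hpos)] at hscale
  have hinv : 𝓕⁻ (fun η => F ((2 * π) • η)) x =
      ∫ η, Complex.exp (Complex.I * ((⟪x, (2 * π) • η⟫ : ℝ) : ℂ)) * F ((2 * π) • η) := by
    rw [Real.fourierInv_eq']
    congr 1 with η
    rw [smul_eq_mul, real_inner_smul_right, real_inner_comm, mul_comm Complex.I]
  rw [hinv, hscale, IFT, smul_smul, mul_assoc, mul_inv_cancel₀ hpos.ne', mul_one]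

theorem mult_eq_fourierInv (q f : EuclideanSpace ℝ (Fin n) → ℂ) :
    mult n q f = 𝓕⁻ (fun η => q ((2 * π) • η) * 𝓕 f η) := by
  ext x
  have hnorm : ((2 * π) ^ (-(n : ℝ) / 2) * (2 * π) ^ n * (2 * π) ^ (-(n : ℝ) / 2) : ℝ) = 1 := by
    rw [← rpow_natCast, ← rpow_add two_pi_pos, ← rpow_add two_pi_pos]
    ring_nf
    exact rpow_zero _
  rw [mult, IFT_eq_fourierInv]
  simp only [FT_eq_fourier, smul_smul, inv_mul_cancel₀ two_pi_pos.ne', one_smul, mul_smul_comm]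
  rw [Real.fourierInv_eq', Real.fourierInv_eq']
  simp only [smul_comm _ ((2 * π) ^ (-(n : ℝ) / 2) : ℝ)]
  rw [integral_smul, smul_smul, hnorm, one_smul]

theorem integral_mult_mul_conj {q : EuclideanSpace ℝ (Fin n) → ℂ}
    (hq : MemLp (fun η => q ((2 * π) • η)) ⊤) (f g : 𝓢(EuclideanSpace ℝ (Fin n), ℂ)) :
    ∫ x, mult n q f x * conj (g x) = multiplierForm hq f g := by
  have hint : Integrable fun η => q ((2 * π) • η) * 𝓕 (f : EuclideanSpace ℝ (Fin n) → ℂ) η :=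
    (𝓕 f : 𝓢(EuclideanSpace ℝ (Fin n), ℂ)).integrable.mul_of_top_right hq
  rw [mult_eq_fourierInv, integral_fourierInv_mul_conj hint g.integrable]
  simp only [multiplierForm_apply, SchwartzMap.fourier_coe, mul_assoc]

theorem integral_mult_resolventSymbol_mul_conj {a : EuclideanSpace ℝ (Fin n) → ℝ} {c m : ℝ}
    {ζ : ℂ} (ha : Measurable a) (hhom : ∀ t : ℝ, 0 < t → ∀ ξ, a (t • ξ) = t * a ξ) (hc : 0 < c)
    (hca : ∀ ξ, c * ‖ξ‖ ≤ a ξ) (hm : 1 ≤ m) (hζ : ζ.im ≠ 0)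
    (f g : 𝓢(EuclideanSpace ℝ (Fin n), ℂ)) :
    ∫ x, mult n (resolventSymbol a m ζ) f x * conj (g x) =
      (((2 * π)⁻¹ : ℝ) : ℂ) * multiplierForm
        (memLp_top_resolventSymbol ha hc hca hm (im_mul_inv_rpow_ne_zero hζ two_pi_pos m)) f g := by
  have hsymbol (η : EuclideanSpace ℝ (Fin n)) : resolventSymbol a m ζ ((2 * π) • η) =
      (((2 * π)⁻¹ : ℝ) : ℂ) * resolventSymbol a m (ζ * (((2 * π) ^ m)⁻¹ : ℝ)) η :=
    resolventSymbol_smul hhom two_pi_pos (le_trans (by positivity) (hca η))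
  have hscaled : MemLp (fun η => resolventSymbol a m ζ ((2 * π) • η)) ⊤ := by
    simp only [hsymbol]
    exact (memLp_top_resolventSymbol ha hc hca hm
      (im_mul_inv_rpow_ne_zero hζ two_pi_pos m)).const_mul _
  rw [integral_mult_mul_conj hscaled, multiplierForm_apply, multiplierForm_apply,
    ← integral_const_mul]
  simp only [hsymbol, mul_assoc]

end Plancherel

theorem resolvent_type_I_general (n : ℕ) (hn : 2 ≤ n) (m : ℝ) (hm : 1 ≤ m)
    (δ : ℝ) (hδ : 1 / 2 < δ) (a : EuclideanSpace ℝ (Fin n) → ℝ) (ha : Measurable a)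
    (hhom : ∀ t : ℝ, 0 < t → ∀ ξ, a (t • ξ) = t * a ξ)
    (c : ℝ) (hc : 0 < c) (hca : ∀ ξ, c * ‖ξ‖ ≤ a ξ) :
    ∃ C > 0, ∀ ζ : ℂ, ζ.im ≠ 0 → ∀ f g : 𝓢(EuclideanSpace ℝ (Fin n), ℂ),
      ‖∫ x, mult n (resolventSymbol a m ζ) f x * conj (g x)‖ ≤
        C * l2Norm (weighted δ f) * l2Norm (weighted δ g) := by
  obtain ⟨C, hC, hform⟩ := exists_norm_multiplierForm_resolventSymbol_le_weighted
    (by rwa [finrank_euclideanSpace_fin]) ha hhom hc hca hm hδ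
  refine ⟨(2 * π)⁻¹ * C, by positivity, fun ζ hζ f g => ?_⟩
  rw [integral_mult_resolventSymbol_mul_conj ha hhom hc hca hm hζ, norm_mul, norm_real,
    Real.norm_of_nonneg (by positivity), mul_assoc, mul_assoc, ← mul_assoc C]
  gcongr
  exact hform _ (im_mul_inv_rpow_ne_zero hζ two_pi_pos m) f g

theorem resolvent_type_I (n : ℕ) (hn : 2 ≤ n) (m : ℝ) (hm : 1 < m)
    (δ : ℝ) (hδ : 1 / 2 < δ)
    (a : EuclideanSpace ℝ (Fin n) → ℝ)
    (ha_cont : Continuous a)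
    (ha_smooth : ContDiffOn ℝ (⊤ : ℕ∞) a {(0 : EuclideanSpace ℝ (Fin n))}ᶜ)
    (ha_hom : ∀ t : ℝ, 0 < t → ∀ ξ, a (t • ξ) = t * a ξ)
    (ha_pos : ∀ ξ : EuclideanSpace ℝ (Fin n), ξ ≠ 0 → 0 < a ξ) :
    ∃ C > 0, ∀ ζ : ℂ, ζ.im ≠ 0 → ∀ f g : SchwartzMap (EuclideanSpace ℝ (Fin n)) ℂ,
      ‖∫ x : EuclideanSpace ℝ (Fin n),
          mult n (fun ξ => ((‖ξ‖ ^ (m - 1) : ℝ) : ℂ) * (ζ - ((a ξ ^ m : ℝ) : ℂ))⁻¹)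
            (fun y => f y) x * (starRingEnd ℂ) (g x)‖
        ≤ C * (eLpNorm (fun x => ((Real.sqrt (1 + ‖x‖ ^ 2) ^ (δ) : ℝ) : ℂ) * f x) 2 volume).toReal *
            (eLpNorm (fun x => ((Real.sqrt (1 + ‖x‖ ^ 2) ^ (δ) : ℝ) : ℂ) * g x) 2 volume).toReal := by
  obtain ⟨c, hc, hca⟩ := exists_le_of_homogeneous ha_cont ha_hom ha_pos
  exact resolvent_type_I_general n hn m hm.le δ hδ a ha_cont.measurable ha_hom c hc hca
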